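/- arXiv:0708.2853 — 2 statements merged into one kernel-verified Lean document; each statement's English description precedes it below -/
import Mathlib

section
/- Let h ≥ 2 and g ≥ 1 be integers, let f : ℤ → ℕ ∪ {∞} be any function such that liminf_{|n|→∞} f(n) ≥ g, and let B be any B_h[g] sequence. Then, for any decreasing function ε : [1,∞) → (0,∞) with ε(x) → 0 as x → ∞, there exists a set A of integers such that r_{A,h}(n) = f(n) for all n ∈ ℤ and A(x) ≫ B(x·ε(x)), i.e. there is a constant C > 0 such that A(x) ≥ C·B(x·ε(x)) for all sufficiently large x. -/
/-!
The set `A` is an increasing union `A₀ ⊆ A₁ ⊆ ⋯`, where `A₀` is a sparse copy of `B` and each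
later stage adds two integers giving one chosen integer one more representation.

Sparse copy (`exists_gappy`). Write `b` in a mixed radix `P 0 ∣ P 1 ∣ ⋯` and insert zeros by
multiplying the digits between `P j` and `P (j + 1)` by `R ^ (j + 1)` (`spread`). If `h ≤ R`, a sum
of at most `h` spread numbers determines the sum of the original numbers, because no carry crosses
an inserted gap (`spread_freiman`); so the image of `B` is still a `B_h[g]` set. If the scales
`P j` grow fast enough in terms of `ε`, then `spread b ≤ x / 2` whenever `b ≤ x * ε x` and `x` is
large, so that the count of `B` up to `x * ε x` is preserved. A final translation makes all
elements so large that they represent no integer `n` with `f n < g`. The result is *gappy*: for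
arbitrarily large `w`, every element is within `w` of a multiple of `K * w`, for a fixed large `K`.

One more representation (`Good.step`). To represent `u` once more, choose such a `w`, huge compared
with `u` and with the finitely many `n` where `f n < g`, and add `x = 8 * h * w` and
`y = u - (h - 1) * x`. A sum using `α` copies of `x` and `β` copies of `y` is congruent to
`(α - (h - 1) * β) * x` modulo `K * w`, up to a small error, so its value determines
`α - (h - 1) * β`, and hence `(α, β)`, except that `(0, 0)` and `(h - 1, 1)` agree; the latter
occurs only in the new representation of `u`. The remaining new sums of `h` terms involve
fewer than `h` old elements, so each integer has at most `g` of them, and it lies outside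
`{n | f n < g}`. Hence the bound by `f` survives, provided one also carries along that
sums of fewer than `h` elements take each value at most `g` times.

Treating every integer `u` infinitely often, whenever its count is still below `f u`, yields exactly
`f` in the limit (`Good.exists_extension`).
-/

open Filter Set

/-- `repFn A h n` is the number of representations of `n` in the form
`n = a 0 + ⋯ + a (h-1)` with `a 0 ≤ ⋯ ≤ a (h-1)` and all `a i ∈ A`;
values lie in `ℕ ∪ {∞}`. -/
noncomputable def repFn (A : Set ℤ) (h : ℕ) (n : ℤ) : ℕ∞ :=
  {a : Fin h → ℤ | Monotone a ∧ (∀ i, a i ∈ A) ∧ ∑ i, a i = n}.encard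

/-- `countAbs A x` is the number of `a ∈ A` with `|a| ≤ x`. -/
noncomputable def countAbs (A : Set ℤ) (x : ℝ) : ℕ :=
  {a : ℤ | a ∈ A ∧ |(a : ℝ)| ≤ x}.ncard

/-- `countLe B x` is the number of `b ∈ B` with `b ≤ x`. -/
noncomputable def countLe (B : Set ℤ) (x : ℝ) : ℕ :=
  {b : ℤ | b ∈ B ∧ (b : ℝ) ≤ x}.ncard

/-! ### Representations as multisets -/

/-- The representations of `n` as a sum of `m` elements of `A`, encoded as multisets rather than as
monotone tuples. -/
def msRep (A : Set ℤ) (m : ℕ) (n : ℤ) : Set (Multiset ℤ) :=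
  {s | s.card = m ∧ (∀ a ∈ s, a ∈ A) ∧ s.sum = n}

theorem repFn_eq (A : Set ℤ) (h : ℕ) (n : ℤ) : repFn A h n = (msRep A h n).encard := by
  unfold repFn
  have hinj : Set.InjOn (fun a : Fin h → ℤ => (↑(List.ofFn a) : Multiset ℤ))
      {a : Fin h → ℤ | Monotone a ∧ (∀ i, a i ∈ A) ∧ ∑ i, a i = n} := by
    rintro a ⟨ha, -, -⟩ b ⟨hb, -, -⟩ hab
    have hp : (List.ofFn a).Perm (List.ofFn b) := Multiset.coe_eq_coe.mp hab
    exact List.ofFn_injective (hp.eq_of_sortedLE ha.sortedLE_ofFn hb.sortedLE_ofFn)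
  rw [← hinj.encard_image]
  congr 1
  ext s
  constructor
  · rintro ⟨a, ⟨-, h2, h3⟩, rfl⟩
    refine ⟨by simp, ?_, by simpa [List.sum_ofFn] using h3⟩
    intro z hz
    obtain ⟨i, rfl⟩ := (List.mem_ofFn' _ _).mp (Multiset.mem_coe.mp hz)
    exact h2 i
  · rintro ⟨h1, h2, h3⟩
    subst h1
    have hl : (s.sort (· ≤ ·)).length = s.card := Multiset.length_sort (· ≤ ·)
    have hof : List.ofFn (fun i : Fin s.card => (s.sort (· ≤ ·)).get (i.cast hl.symm))
        = s.sort (· ≤ ·) := by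
      apply List.ext_get <;> simp
    have hs : (↑(s.sort (· ≤ ·)) : Multiset ℤ) = s := Multiset.sort_eq _ _
    refine ⟨fun i => (s.sort (· ≤ ·)).get (i.cast hl.symm), ⟨?_, ?_, ?_⟩, ?_⟩
    · rw [← List.sortedLE_ofFn_iff, hof]
      exact (Multiset.pairwise_sort s (· ≤ ·)).sortedLE
    · intro i
      exact h2 _ ((Multiset.mem_sort _).mp (List.get_mem _ _))
    · rw [← List.sum_ofFn, hof, ← Multiset.sum_coe, hs, h3]
    · exact (congrArg (fun l : List ℤ => (l : Multiset ℤ)) hof).trans hs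

theorem msRep_mono {A A' : Set ℤ} (h : A ⊆ A') (m : ℕ) (n : ℤ) : msRep A m n ⊆ msRep A' m n :=
  fun _ hs => ⟨hs.1, fun a ha => h (hs.2.1 a ha), hs.2.2⟩

/-- A bound for representations by `h` summands passes to fewer summands, by padding with copies of
a fixed element. -/
theorem msRep_le_of_le {C : Set ℤ} {h g : ℕ} (hg : 1 ≤ g)
    (hC : ∀ n, (msRep C h n).encard ≤ g) {m : ℕ} (hm : m ≤ h) (n : ℤ) :
    (msRep C m n).encard ≤ g := by
  rcases C.eq_empty_or_nonempty with rfl | ⟨c, hc⟩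
  · refine le_trans (Set.encard_le_encard (t := {0}) ?_) (by simpa using hg)
    rintro s ⟨-, h2, -⟩
    simpa using Multiset.eq_zero_of_forall_notMem (s := s) h2
  · have hinj : Function.Injective (fun s : Multiset ℤ => s + Multiset.replicate (h - m) c) :=
      add_left_injective _
    rw [← hinj.encard_image]
    refine le_trans (Set.encard_le_encard ?_) (hC (n + (h - m : ℕ) * c))
    rintro _ ⟨s, ⟨h1, h2, h3⟩, rfl⟩
    refine ⟨by simp [h1]; omega, ?_, by simp [h3]⟩
    intro a ha
    rcases Multiset.mem_add.mp ha with ha | ha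
    · exact h2 a ha
    · rw [Multiset.eq_of_mem_replicate ha]; exact hc

/-! ### Inserting zeros into a mixed radix expansion -/

/-- Zeros inserted into the expansion of `b` at the first `J` scales `P 0, …, P (J - 1)`: the digit
block of `b` below `P 0` is unchanged, the one between `P j` and `P (j + 1)` is multiplied by
`K ^ (j + 1)`, and everything from `P (J - 1)` on is multiplied by `K ^ J`. -/
def spread (K : ℕ) (P : ℕ → ℕ) : ℕ → ℕ → ℕ
  | 0, b => b
  | J + 1, b => spread K P J (b % P J) + K ^ (J + 1) * P J * (b / P J)

theorem spread_le {K : ℕ} (hK : 1 ≤ K) (P : ℕ → ℕ) (J b : ℕ) : spread K P J b ≤ K ^ J * b := by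
  induction J generalizing b with
  | zero => simp [spread]
  | succ J ih =>
    rw [spread]
    calc _ ≤ K ^ J * (b % P J) + K ^ (J + 1) * P J * (b / P J) := by gcongr; exact ih _
      _ ≤ K ^ (J + 1) * (b % P J) + K ^ (J + 1) * P J * (b / P J) := by
        gcongr; omega
      _ = K ^ (J + 1) * (b % P J + P J * (b / P J)) := by ring
      _ = _ := by rw [Nat.mod_add_div]

/-- Scales exceeding `b` have no effect on `b`. -/
theorem spread_stable (K : ℕ) {P : ℕ → ℕ} (hP : Monotone P) {j J b : ℕ} (hb : b < P j)
    (hj : j ≤ J) : spread K P J b = spread K P j b := by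
  induction J, hj using Nat.le_induction with
  | base => rfl
  | succ J hJ ih =>
    have : b < P J := hb.trans_le (hP hJ)
    rw [spread, Nat.mod_eq_of_lt this, Nat.div_eq_of_lt this, ih]; simp

/-- The gap at scale `j`: modulo `K ^ (j + 1) * P j`, spread numbers occupy only the lowest
`K`-th part of the residues. -/
theorem spread_mod {K : ℕ} (hK : 1 ≤ K) {P : ℕ → ℕ} (hpos : ∀ j, 0 < P j)
    (hdvd : ∀ i j, i ≤ j → P i ∣ P j) {j J : ℕ} (hj : j < J) (b : ℕ) :
    spread K P J b % (K ^ (j + 1) * P j) ≤ K ^ j * P j := by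
  induction J generalizing b with
  | zero => omega
  | succ J ih =>
    have hd : K ^ (j + 1) * P j ∣ K ^ (J + 1) * P J * (b / P J) :=
      Dvd.dvd.mul_right (mul_dvd_mul (pow_dvd_pow _ (by omega)) (hdvd _ _ (by omega))) _
    rw [spread, Nat.add_mod, Nat.mod_eq_zero_of_dvd hd, add_zero, Nat.mod_mod]
    rcases Nat.lt_succ_iff_lt_or_eq.mp hj with h | rfl
    · exact ih h _
    · exact (Nat.mod_le _ _).trans ((spread_le hK P j _).trans
        (Nat.mul_le_mul_left _ (Nat.mod_lt _ (hpos j)).le))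

/-- Sums of at most `h ≤ K` spread numbers determine the sums of the original numbers. The part of
such a sum below the top gap is less than `K ^ (J + 1) * P J`, so the low and high parts can be read
off separately. -/
theorem spread_freiman {K h : ℕ} (hK : 1 ≤ K) (hKh : h ≤ K) {P : ℕ → ℕ} (hpos : ∀ j, 0 < P j)
    (J : ℕ) {s t : Multiset ℕ} (hs : s.card ≤ h) (ht : t.card ≤ h)
    (hst : (s.map (spread K P J)).sum = (t.map (spread K P J)).sum) : s.sum = t.sum := by
  induction J generalizing s t with
  | zero => simpa [spread] using hst
  | succ J ih =>
    have key : ∀ s : Multiset ℕ, (s.map (spread K P (J + 1))).sum =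
        ((s.map (· % P J)).map (spread K P J)).sum
          + K ^ (J + 1) * P J * (s.map (· / P J)).sum := by
      intro s
      rw [← Multiset.sum_map_mul_left, Multiset.map_map, ← Multiset.sum_map_add]
      rfl
    have key2 : ∀ s : Multiset ℕ, s.sum = (s.map (· % P J)).sum + P J * (s.map (· / P J)).sum := by
      intro s
      rw [← Multiset.sum_map_mul_left, ← Multiset.sum_map_add]
      simp [Nat.mod_add_div]
    have hW : 0 < K ^ (J + 1) * P J := Nat.mul_pos (by positivity) (hpos J)
    have small : ∀ s : Multiset ℕ, s.card ≤ h →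
        ((s.map (· % P J)).map (spread K P J)).sum < K ^ (J + 1) * P J := by
      intro s hs
      rcases Multiset.empty_or_exists_mem s with rfl | ⟨z, hz⟩
      · simpa using hW
      have hc : 0 < s.card := Multiset.card_pos_iff_exists_mem.mpr ⟨z, hz⟩
      have h1 : ((s.map (· % P J)).map (spread K P J)).sum ≤ s.card • (K ^ J * P J - 1) := by
        have := Multiset.sum_le_card_nsmul ((s.map (· % P J)).map (spread K P J))
          (K ^ J * P J - 1) ?_
        · simpa using this
        · intro y hy
          simp only [Multiset.map_map, Multiset.mem_map, Function.comp] at hy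
          obtain ⟨a, -, rfl⟩ := hy
          apply Nat.le_sub_one_of_lt
          exact (spread_le hK P J _).trans_lt
            (Nat.mul_lt_mul_of_pos_left (Nat.mod_lt _ (hpos J)) (by positivity))
      have hv : 0 < K ^ J * P J := Nat.mul_pos (by positivity) (hpos J)
      calc _ ≤ _ := h1
        _ = s.card * (K ^ J * P J - 1) := by simp
        _ < s.card * (K ^ J * P J) := Nat.mul_lt_mul_of_pos_left (by omega) hc
        _ ≤ K * (K ^ J * P J) := Nat.mul_le_mul_right _ (hs.trans hKh)
        _ = _ := by ring
    rw [key, key] at hst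
    have hm := congrArg (· % (K ^ (J + 1) * P J)) hst
    simp only [Nat.add_mul_mod_self_left, Nat.mod_eq_of_lt (small s hs),
      Nat.mod_eq_of_lt (small t ht)] at hm
    have hd := ih (s := s.map (· % P J)) (t := t.map (· % P J)) (by simpa) (by simpa) hm
    have hq : (s.map (· / P J)).sum = (t.map (· / P J)).sum := by
      rw [hm] at hst
      exact Nat.eq_of_mul_eq_mul_left hW (Nat.add_left_cancel hst)
    rw [key2 s, key2 t, hd, hq]

/-! ### The sparse copy of `B` -/

/-- For arbitrarily large `w`, every element of `A` is within `w` of a multiple of `K * w`. -/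
def Gappy (K : ℕ) (A : Set ℤ) : Prop :=
  ∀ L : ℤ, ∃ w : ℤ, L ≤ w ∧ ∀ a ∈ A, ∃ r : ℤ, K * w ∣ a - r ∧ |r| ≤ w

theorem exists_map_of_forall_mem_image {α β : Type*} (φ : α → β) (S : Set α) (s : Multiset β)
    (hs : ∀ a ∈ s, a ∈ φ '' S) : ∃ t : Multiset α, (∀ b ∈ t, b ∈ S) ∧ t.map φ = s := by
  induction s using Multiset.induction with
  | empty => exact ⟨0, by simp, by simp⟩
  | cons a s ih =>
    obtain ⟨t, ht, rfl⟩ := ih fun a ha => hs a (Multiset.mem_cons_of_mem ha)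
    obtain ⟨b, hb, rfl⟩ := hs a (Multiset.mem_cons_self _ _)
    refine ⟨b ::ₘ t, ?_, by simp⟩
    intro z hz
    rcases Multiset.mem_cons.mp hz with rfl | hz
    exacts [hb, ht z hz]

/-- Scales growing so fast that beyond the `j`-th one `ε` outweighs the factor `R ^ (j + 1)` by which
`spread` dilates. -/
theorem exists_scales (R : ℕ) {ε : ℝ → ℝ} (hε : Tendsto ε atTop (nhds 0)) :
    ∃ P : ℕ → ℕ, (∀ j, 0 < P j) ∧ (∀ i j, i ≤ j → P i ∣ P j) ∧ StrictMono P ∧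
      ∀ j, ∀ x : ℝ, (P j : ℝ) ≤ x → (R : ℝ) ^ (j + 1) * ε x ≤ 1 / 2 := by
  have hX : ∀ j : ℕ, ∃ X : ℕ, ∀ x : ℝ, (X : ℝ) ≤ x → (R : ℝ) ^ (j + 1) * ε x ≤ 1 / 2 := by
    intro j
    have h1 : Tendsto (fun x => (R : ℝ) ^ (j + 1) * ε x) atTop (nhds 0) := by
      simpa using hε.const_mul ((R : ℝ) ^ (j + 1))
    obtain ⟨X, hX⟩ := eventually_atTop.mp (h1.eventually_le_const (by norm_num : (0 : ℝ) < 1 / 2))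
    obtain ⟨n, hn⟩ := exists_nat_ge X
    exact ⟨n, fun x hx => hX x (hn.trans hx)⟩
  choose X hX using hX
  let P : ℕ → ℕ := fun j => ∏ i ∈ Finset.range (j + 1), (X i + 2)
  have hsucc : ∀ j, P (j + 1) = P j * (X (j + 1) + 2) := fun j => Finset.prod_range_succ _ _
  have hpos : ∀ j, 0 < P j := fun j => Finset.prod_pos fun i _ => by omega
  refine ⟨P, hpos, ?_, strictMono_nat_of_lt_succ ?_, ?_⟩
  · intro i j hij
    exact Finset.prod_dvd_prod_of_subset _ _ _ (Finset.range_subset_range.mpr (by omega))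
  · intro j
    rw [hsucc]
    have := hpos j
    nlinarith [Nat.zero_le (X (j + 1)), Nat.mul_le_mul_left (P j) (Nat.zero_le (X (j + 1)))]
  · intro j x hx
    refine hX j x (le_trans ?_ hx)
    have : X j + 2 ≤ P j := Nat.le_of_dvd (hpos j) (Finset.dvd_prod_of_mem _ (by simp))
    exact_mod_cast (by omega : X j ≤ P j)

theorem finite_abs_le (A : Set ℤ) (x : ℝ) : {a : ℤ | a ∈ A ∧ |(a : ℝ)| ≤ x}.Finite := by
  refine (Set.finite_Icc (-⌈x⌉) ⌈x⌉).subset ?_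
  rintro a ⟨-, ha⟩
  rw [abs_le] at ha
  have := Int.le_ceil x
  constructor
  · have : (-(⌈x⌉ : ℝ)) ≤ a := by linarith
    exact_mod_cast this
  · have : (a : ℝ) ≤ ⌈x⌉ := by linarith
    exact_mod_cast this

/-- The translated, spread copy of `B`. The radix used is `2 * K` rather than `K`, which leaves room
for the translation by `N` in the definition of `Gappy`. -/
theorem exists_gappy {h g K : ℕ} (hh : 1 ≤ h) (hK : 1 ≤ K) (hKh : h ≤ K) (N : ℕ)
    {B : Set ℤ} (hBnonneg : ∀ b ∈ B, 0 ≤ b) (hB : ∀ n : ℤ, 0 ≤ n → repFn B h n ≤ g)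
    {ε : ℝ → ℝ} (hε : Tendsto ε atTop (nhds 0)) :
    ∃ C : Set ℤ, (∀ n, (msRep C h n).encard ≤ g) ∧ (∀ c ∈ C, (N : ℤ) ≤ c) ∧ Gappy K C ∧
      ∀ᶠ x in atTop, countLe B (x * ε x) ≤ countAbs C x := by
  obtain ⟨P, hpos, hdvd, hmono, hPε⟩ := exists_scales (2 * K) hε
  have hR : 1 ≤ 2 * K := by omega
  have hlt : ∀ b, b < P b := by
    intro b
    induction b with
    | zero => exact hpos 0
    | succ b ih => exact Nat.lt_of_le_of_lt ih (hmono (Nat.lt_succ_self b))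
  -- by `hlt`, every scale from index `b` on exceeds `b`, so `T b` is the stable value of `spread`
  let T : ℕ → ℕ := fun b => spread (2 * K) P b b
  have hT : ∀ {b J : ℕ}, b ≤ J → spread (2 * K) P J b = T b := fun {b J} hJ =>
    spread_stable _ hmono.monotone (hlt b) hJ
  have hTj : ∀ {b j : ℕ}, b < P j → T b = spread (2 * K) P j b := by
    intro b j hb
    rw [← hT (le_max_left b j)]
    exact spread_stable _ hmono.monotone hb (le_max_right b j)
  have hTF : ∀ s t : Multiset ℕ, s.card ≤ h → t.card ≤ h → (s.map T).sum = (t.map T).sum →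
      s.sum = t.sum := by
    intro s t hs ht hst
    have e : ∀ u : Multiset ℕ, (∀ a ∈ u, a ≤ s.sum + t.sum) →
        u.map T = u.map (spread (2 * K) P (s.sum + t.sum)) := fun u hu =>
      Multiset.map_congr rfl fun a ha => (hT (hu a ha)).symm
    rw [e s fun a ha => (Multiset.le_sum_of_mem ha).trans (by omega),
      e t fun a ha => (Multiset.le_sum_of_mem ha).trans (by omega)] at hst
    exact spread_freiman hR (by omega) hpos _ hs ht hst
  have hTinj : Function.Injective T := by
    intro a b hab
    simpa using hTF {a} {b} (by simpa) (by simpa) (by simpa)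
  let φ : ℤ → ℤ := fun b => N + (T b.toNat : ℤ)
  have hBall : ∀ n, (msRep B h n).encard ≤ g := by
    intro n
    rcases le_or_gt 0 n with hn | hn
    · rw [← repFn_eq]; exact hB n hn
    · have : msRep B h n = ∅ := by
        ext s
        simp only [Set.mem_empty_iff_false, iff_false]
        rintro ⟨-, h2, h3⟩
        have := Multiset.sum_nonneg (fun a ha => hBnonneg a (h2 a ha))
        omega
      simp [this]
  have hsum : ∀ t : Multiset ℤ, (t.map φ).sum
      = t.card * N + (((t.map Int.toNat).map T).sum : ℕ) := by
    intro t
    induction t using Multiset.induction with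
    | empty => simp
    | cons a t ih => simp only [Multiset.map_cons, Multiset.sum_cons, ih, φ]; push_cast
                     simp; ring
  have hnat : ∀ t : Multiset ℤ, (∀ b ∈ t, b ∈ B) → (((t.map Int.toNat).sum : ℕ) : ℤ) = t.sum := by
    intro t
    induction t using Multiset.induction with
    | empty => simp
    | cons a t ih =>
      intro ht
      have ha := hBnonneg a (ht a (Multiset.mem_cons_self _ _))
      rw [Multiset.map_cons, Multiset.sum_cons, Multiset.sum_cons, Nat.cast_add,
        ih fun b hb => ht b (Multiset.mem_cons_of_mem hb), Int.toNat_of_nonneg ha]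
  refine ⟨φ '' B, ?_, ?_, ?_, ?_⟩
  · intro n
    rcases (msRep (φ '' B) h n).eq_empty_or_nonempty with he | ⟨s₀, h1, h2, h3⟩
    · simp [he]
    obtain ⟨t₀, ht₀, rfl⟩ := exists_map_of_forall_mem_image φ B s₀ h2
    refine le_trans (Set.encard_le_encard (t := Multiset.map φ '' msRep B h t₀.sum) ?_)
      ((Set.encard_image_le _ _).trans (hBall _))
    rintro s ⟨g1, g2, g3⟩
    obtain ⟨t, ht, rfl⟩ := exists_map_of_forall_mem_image φ B s g2
    refine ⟨t, ⟨by simpa using g1, ht, ?_⟩, rfl⟩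
    rw [Multiset.card_map] at g1 h1
    rw [hsum, g1] at g3
    rw [hsum, h1] at h3
    rw [← hnat t ht, ← hnat t₀ ht₀]
    congr 1
    apply hTF
    · simp [g1]
    · simp [h1]
    · have := g3.trans h3.symm
      exact_mod_cast add_left_cancel this
  · rintro _ ⟨b, -, rfl⟩
    simp only [φ]; omega
  · intro L
    set j := N + L.toNat with hj
    set v : ℕ := (2 * K) ^ j * P j with hv
    have hvj : j ≤ v := (hlt j).le.trans (Nat.le_mul_of_pos_left _ (by positivity))
    refine ⟨2 * v, by omega, ?_⟩
    rintro _ ⟨b, -, rfl⟩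
    have hm : T b.toNat % ((2 * K) ^ (j + 1) * P j) ≤ v := by
      rw [← hT (Nat.le_add_right b.toNat (j + 1))]
      exact spread_mod hR hpos hdvd (by omega) _
    have hW : (2 * K) ^ (j + 1) * P j = K * (2 * v) := by rw [hv]; ring
    rw [hW] at hm
    refine ⟨N + (T b.toNat % (K * (2 * v)) : ℕ), ?_, ?_⟩
    · simp only [φ]
      rw [add_sub_add_left_eq_sub]
      push_cast
      exact Int.dvd_self_sub_emod
    · rw [abs_of_nonneg (by positivity)]
      omega
  · have h1 : ∀ᶠ x in atTop, ε x ≤ 1 / 2 := hε.eventually_le_const (by norm_num)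
    filter_upwards [h1, eventually_ge_atTop (2 * N : ℝ), eventually_ge_atTop (1 : ℝ)]
      with x hx hxN hx1
    unfold countLe countAbs
    have hφinj : Set.InjOn φ {b : ℤ | b ∈ B ∧ (b : ℝ) ≤ x * ε x} := by
      rintro a ⟨ha, -⟩ b ⟨hb, -⟩ hab
      have := hTinj (by simpa [φ] using hab : T a.toNat = T b.toNat)
      have := hBnonneg a ha
      have := hBnonneg b hb
      omega
    rw [← hφinj.ncard_image]
    apply Set.ncard_le_ncard
    · rintro _ ⟨b, ⟨hb, hbx⟩, rfl⟩
      refine ⟨⟨b, hb, rfl⟩, ?_⟩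
      lift b to ℕ using hBnonneg b hb
      have hφb : (φ b : ℝ) = N + T b := by simp [φ]
      rw [hφb, abs_of_nonneg (by positivity)]
      suffices (T b : ℝ) ≤ x / 2 by linarith
      have hbx' : (b : ℝ) ≤ x * ε x := by simpa using hbx
      -- `j` is the index of the least scale exceeding `b`; then `b` is dilated by at most
      -- `(2 * K) ^ j`, and if `j ≠ 0` then `x ≥ b` is beyond the previous scale
      have hex : ∃ j, b < P j := ⟨b, hlt b⟩
      obtain ⟨j, hj, hmin⟩ : ∃ j, b < P j ∧ ∀ i < j, ¬ b < P i :=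
        ⟨Nat.find hex, Nat.find_spec hex, fun i hi => Nat.find_min hex hi⟩
      have hle : (T b : ℝ) ≤ ((2 * K : ℕ) : ℝ) ^ j * b := by
        rw [hTj hj]; exact_mod_cast spread_le hR P j b
      rcases j with _ | j
      · have : x * ε x ≤ x * (1 / 2) := by gcongr
        have hle' : (T b : ℝ) ≤ b := by simpa using hle
        linarith
      · have hPj : P j ≤ b := not_lt.mp (hmin j (by omega))
        have hbx2 : (b : ℝ) ≤ x := by nlinarith
        have := hPε j x (le_trans (by exact_mod_cast hPj) hbx2)
        calc (T b : ℝ) ≤ ((2 * K : ℕ) : ℝ) ^ (j + 1) * b := hle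
          _ ≤ ((2 * K : ℕ) : ℝ) ^ (j + 1) * (x * ε x) := by gcongr
          _ = x * (((2 * K : ℕ) : ℝ) ^ (j + 1) * ε x) := by ring
          _ ≤ x * (1 / 2) := by gcongr
          _ = x / 2 := by ring
    · exact finite_abs_le _ x

/-! ### One more representation of a given integer -/

/-- The invariant of the construction: `A` is gappy, represents no integer more than `g` times as a
sum of `m < h` elements, and represents each `n` at most `f n` times as a sum of `h` elements. -/
structure Good (K h g : ℕ) (f : ℤ → ℕ∞) (A : Set ℤ) : Prop where
  gappy : Gappy K A
  short : ∀ m < h, ∀ n, (msRep A m n).encard ≤ g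
  full : ∀ n, (msRep A h n).encard ≤ f n

/-- The value `α - H * β` determines `(α, β)` within `α + β ≤ H + 1`, except that `(0, 0)` and
`(H, 1)` agree. -/
theorem coef_eq_of_eq {H α β α' β' : ℕ} (h1 : α + β ≤ H + 1) (h2 : α' + β' ≤ H + 1)
    (e : (α : ℤ) - H * β = α' - H * β') :
    (α = α' ∧ β = β') ∨ (α = H ∧ β = 1 ∧ α' = 0 ∧ β' = 0) ∨
      (α = 0 ∧ β = 0 ∧ α' = H ∧ β' = 1) := by
  rcases lt_trichotomy β β' with hb | rfl | hb
  · have : (H : ℤ) * 1 ≤ H * ((β' : ℤ) - β) := by gcongr; omega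
    right; right
    rw [mul_sub] at this
    refine ⟨?_, ?_, ?_, ?_⟩ <;> omega
  · left; exact ⟨by omega, rfl⟩
  · have : (H : ℤ) * 1 ≤ H * ((β : ℤ) - β') := by gcongr; omega
    rw [mul_sub] at this
    right; left
    refine ⟨?_, ?_, ?_, ?_⟩ <;> omega

theorem exists_decomp {A : Set ℤ} {x y : ℤ} (s : Multiset ℤ)
    (hs : ∀ a ∈ s, a ∈ insert x (insert y A)) :
    ∃ (α β : ℕ) (t : Multiset ℤ), (∀ a ∈ t, a ∈ A) ∧
      s = Multiset.replicate α x + Multiset.replicate β y + t := by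
  induction s using Multiset.induction with
  | empty => exact ⟨0, 0, 0, by simp, by simp⟩
  | cons a s ih =>
    obtain ⟨α, β, t, ht, rfl⟩ := ih fun a ha => hs a (Multiset.mem_cons_of_mem ha)
    rcases hs a (Multiset.mem_cons_self _ _) with rfl | rfl | ha
    · exact ⟨α + 1, β, t, ht, by simp [Multiset.replicate_succ]⟩
    · exact ⟨α, β + 1, t, ht, by simp [Multiset.replicate_succ]⟩
    · refine ⟨α, β, a ::ₘ t, ?_, by simp⟩
      intro z hz
      rcases Multiset.mem_cons.mp hz with rfl | hz
      exacts [ha, ht z hz]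

/-- Representations with the same numbers of copies of `x` and `y` are determined by their parts
in `A`. -/
theorem encard_le_of_fixed_coef {A : Set ℤ} {x y : ℤ} {S : Set (Multiset ℤ)} {m : ℕ} {n : ℤ}
    (α β : ℕ) (hS : ∀ s ∈ S, s.card = m ∧ s.sum = n ∧ ∃ t : Multiset ℤ, (∀ a ∈ t, a ∈ A) ∧
      s = Multiset.replicate α x + Multiset.replicate β y + t) :
    S.encard ≤ (msRep A (m - α - β) (n - α * x - β * y)).encard := by
  refine le_trans (Set.encard_le_encard ?_) (Set.encard_image_le
    (fun t => Multiset.replicate α x + Multiset.replicate β y + t) _)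
  intro s hs
  obtain ⟨h1, h2, t, ht, rfl⟩ := hS s hs
  refine ⟨t, ⟨?_, ht, ?_⟩, rfl⟩
  · simp at h1; omega
  · simp at h2; linarith

theorem gappy_insert {K : ℕ} {A : Set ℤ} (hA : Gappy K A) (x : ℤ) : Gappy K (insert x A) := by
  intro L
  obtain ⟨w, hw, h⟩ := hA (max L |x|)
  refine ⟨w, (le_max_left _ _).trans hw, ?_⟩
  rintro a (rfl | ha)
  · exact ⟨a, by simp, (le_max_right _ _).trans hw⟩
  · exact h a ha

theorem exists_sum_residue {A : Set ℤ} {M w : ℤ} (hA : ∀ a ∈ A, ∃ r : ℤ, M ∣ a - r ∧ |r| ≤ w)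
    (t : Multiset ℤ) (ht : ∀ a ∈ t, a ∈ A) : ∃ r : ℤ, M ∣ t.sum - r ∧ |r| ≤ t.card * w := by
  induction t using Multiset.induction with
  | empty => exact ⟨0, by simp, by simp⟩
  | cons a t ih =>
    obtain ⟨r, h1, h2⟩ := ih fun a ha => ht a (Multiset.mem_cons_of_mem ha)
    obtain ⟨q, h3, h4⟩ := hA a (ht a (Multiset.mem_cons_self _ _))
    refine ⟨q + r, ?_, ?_⟩
    · rw [Multiset.sum_cons, add_sub_add_comm]; exact dvd_add h3 h1
    · rw [Multiset.card_cons]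
      have := abs_add_le q r
      push_cast; linarith

/-- A relation `c * x + e ≡ 0` modulo `32 * h ^ 3 * w` with `x = 8 * h * w` and `c`, `e` in the ranges
arising below forces `c = 0`: the left side is too small to wrap around, and `|e| < x`. -/
theorem coef_zero {h : ℕ} (hh : 1 ≤ h) {w c e : ℤ} (hw : 0 < w) (hc : |c| ≤ 2 * h ^ 2)
    (he : |e| ≤ 7 * h * w) (hd : ((32 * h ^ 3 : ℕ) : ℤ) * w ∣ c * (8 * h * w) + e) : c = 0 := by
  have hh' : (1 : ℤ) ≤ h := by exact_mod_cast hh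
  have hhw : 0 < (h : ℤ) * w := by positivity
  have hb : |c * (8 * h * w) + e| < ((32 * h ^ 3 : ℕ) : ℤ) * w := by
    calc |c * (8 * h * w) + e| ≤ |c * (8 * h * w)| + |e| := abs_add_le _ _
      _ = |c| * (8 * h * w) + |e| := by
        rw [abs_mul, abs_of_pos (by positivity : (0 : ℤ) < 8 * h * w)]
      _ ≤ 2 * h ^ 2 * (8 * h * w) + 7 * h * w := by gcongr
      _ < _ := by
        push_cast
        have : (h : ℤ) * w * 1 ≤ h * w * (h ^ 2) := by
          gcongr; exact one_le_pow₀ hh'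
        nlinarith
  have h0 := Int.eq_zero_of_abs_lt_dvd hd hb
  by_contra hne
  have h1 : 1 ≤ |c| := Int.one_le_abs hne
  have h2 : |c| * (8 * h * w) = |e| := by
    rw [← abs_of_pos (by positivity : (0 : ℤ) < 8 * h * w), ← abs_mul,
      eq_neg_of_add_eq_zero_left h0, abs_neg]
  nlinarith

/-- If `u` has fewer than `f u` representations, adding `x = 8 * h * w` and `y = u - H * x`, where
`h = H + 1` and `w` is a large scale of the gappy set, keeps the invariant and gives `u` one more
representation. -/
theorem Good.step {H g : ℕ} (hH : 1 ≤ H) {f : ℤ → ℕ∞} (hf : ∀ᶠ n in cofinite, (g : ℕ∞) ≤ f n)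
    {A : Set ℤ} (hA : Good (32 * (H + 1) ^ 3) (H + 1) g f A) {u : ℤ}
    (hu : (msRep A (H + 1) u).encard < f u) :
    ∃ A', A ⊆ A' ∧ Good (32 * (H + 1) ^ 3) (H + 1) g f A' ∧
      (msRep A (H + 1) u).encard + 1 ≤ (msRep A' (H + 1) u).encard := by
  set h := H + 1 with hh
  obtain ⟨F, hF⟩ : ∃ F : ℤ, ∀ n, ¬ (g : ℕ∞) ≤ f n → |n| ≤ F := by
    have hfin : {n | ¬ (g : ℕ∞) ≤ f n}.Finite := hf
    obtain ⟨F, hF⟩ := (hfin.image fun n => |n|).bddAbove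
    exact ⟨F, fun n hn => hF ⟨n, hn, rfl⟩⟩
  obtain ⟨w, hwL, hw⟩ := hA.gappy (max 1 (max F |u|))
  have hw1 : 0 < w := lt_of_lt_of_le one_pos ((le_max_left _ _).trans hwL)
  have hwF : F ≤ w := ((le_max_left _ _).trans (le_max_right _ _)).trans hwL
  have hwu : |u| ≤ w := ((le_max_right _ _).trans (le_max_right _ _)).trans hwL
  have hhZ : (h : ℤ) = H + 1 := by simp [hh]
  have hHZ : (1 : ℤ) ≤ H := by exact_mod_cast hH
  have hhw : 0 < (h : ℤ) * w := by rw [hhZ]; positivity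
  set x : ℤ := 8 * h * w with hx
  set y : ℤ := u - H * x with hy
  have coef_bd : ∀ α β : ℕ, α + β ≤ h → |(α : ℤ) - H * β| ≤ h ^ 2 := by
    intro α β hab
    have h1 : (α : ℤ) + β ≤ H + 1 := by exact_mod_cast hab
    rw [abs_le, hhZ]
    constructor <;> nlinarith [mul_nonneg (by positivity : (0 : ℤ) ≤ H) (by positivity : (0 : ℤ) ≤ β)]
  -- a sum over the enlarged set is `(α - H * β) * x` plus a small error, modulo `K * w`
  have hform : ∀ (α β : ℕ) (t : Multiset ℤ), (∀ a ∈ t, a ∈ A) → α + β + t.card ≤ h →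
      ∃ e : ℤ, |e| ≤ 2 * h * w ∧ ((32 * h ^ 3 : ℕ) : ℤ) * w ∣
        (Multiset.replicate α x + Multiset.replicate β y + t).sum
          - (((α : ℤ) - H * β) * x + e) := by
    intro α β t ht hc
    obtain ⟨r, hr1, hr2⟩ := exists_sum_residue hw t ht
    refine ⟨β * u + r, ?_, ?_⟩
    · have h1 : |(β : ℤ) * u| ≤ h * w := by
        rw [abs_mul, Nat.abs_cast]
        gcongr; omega
      have h2 : (t.card : ℤ) * w ≤ h * w := by gcongr; omega
      have := abs_add_le ((β : ℤ) * u) r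
      linarith
    · have : (Multiset.replicate α x + Multiset.replicate β y + t).sum
          - (((α : ℤ) - H * β) * x + (β * u + r)) = t.sum - r := by
        simp [hy]; ring
      rwa [this]
  have hsim : ∀ (α β α' β' : ℕ) (t t' : Multiset ℤ), (∀ a ∈ t, a ∈ A) → (∀ a ∈ t', a ∈ A) →
      α + β + t.card ≤ h → α' + β' + t'.card ≤ h →
      (Multiset.replicate α x + Multiset.replicate β y + t).sum
        = (Multiset.replicate α' x + Multiset.replicate β' y + t').sum →
      (α : ℤ) - H * β = α' - H * β' := by
    intro α β α' β' t t' ht ht' hc hc' hsum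
    obtain ⟨e, he, hd⟩ := hform α β t ht hc
    obtain ⟨e', he', hd'⟩ := hform α' β' t' ht' hc'
    have b1 := coef_bd α β (by omega)
    have b2 := coef_bd α' β' (by omega)
    have := coef_zero (h := h) (w := w) (c := (α - H * β) - (α' - H * β')) (e := e - e')
      (by omega) hw1 (by have := abs_sub ((α : ℤ) - H * β) (α' - H * β'); linarith)
      (by have := abs_sub e e'; linarith) (by
        rw [hsum] at hd
        have := dvd_sub hd' hd
        rw [← hx]
        exact this.trans (dvd_of_eq (by ring)))
    linarith
  have hsmall : ∀ (α β : ℕ) (t : Multiset ℤ), (∀ a ∈ t, a ∈ A) → α + β + t.card ≤ h →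
      |(Multiset.replicate α x + Multiset.replicate β y + t).sum| ≤ w →
      (α : ℤ) - H * β = 0 := by
    intro α β t ht hc hs
    obtain ⟨e, he, hd⟩ := hform α β t ht hc
    have b1 := coef_bd α β (by omega)
    refine coef_zero (h := h) (w := w)
      (e := e - (Multiset.replicate α x + Multiset.replicate β y + t).sum)
      (by omega) hw1 (by nlinarith) ?_ ?_
    · have := abs_sub e (Multiset.replicate α x + Multiset.replicate β y + t).sum
      nlinarith
    · rw [← hx, ← dvd_neg]
      exact hd.trans (dvd_of_eq (by ring))
  have hxA : x ∉ A := by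
    intro hxA
    have := hsim 1 0 0 0 0 {x} (by simp) (by simpa) (by simp; omega) (by simp; omega) (by simp)
    simp at this
  refine ⟨insert x (insert y A), (Set.subset_insert _ _).trans (Set.subset_insert _ _),
    ⟨gappy_insert (gappy_insert hA.gappy y) x, ?_, ?_⟩, ?_⟩
  · intro m hm n
    rcases (msRep (insert x (insert y A)) m n).eq_empty_or_nonempty with he | ⟨s₀, h1, h2, h3⟩
    · simp [he]
    obtain ⟨α, β, t, ht, rfl⟩ := exists_decomp s₀ h2
    refine le_trans (encard_le_of_fixed_coef (x := x) (y := y) (n := n) α β ?_) (hA.short (m - α - β) (by omega) _)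
    rintro s ⟨g1, g2, g3⟩
    obtain ⟨α', β', t', ht', rfl⟩ := exists_decomp s g2
    refine ⟨g1, g3, t', ht', ?_⟩
    simp only [Multiset.card_add, Multiset.card_replicate] at h1 g1
    have := hsim α' β' α β t' t ht' ht (by omega) (by omega) (g3.trans h3.symm)
    rcases coef_eq_of_eq (by omega) (by omega) this with ⟨rfl, rfl⟩ | h | h
    · rfl
    all_goals omega
  · intro n
    -- either some, hence every, representation of `n` has the same `(α, β)` with `α - H * β ≠ 0`,
    -- or all representations have `α - H * β = 0`
    by_cases hn : ∃ (α β : ℕ) (t : Multiset ℤ), (∀ a ∈ t, a ∈ A) ∧ α + β + t.card = h ∧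
        (Multiset.replicate α x + Multiset.replicate β y + t).sum = n ∧ (α : ℤ) - H * β ≠ 0
    · obtain ⟨α, β, t, ht, hc, hs, hne⟩ := hn
      have hgf : (g : ℕ∞) ≤ f n := by
        by_contra hgf
        exact hne (hsmall α β t ht hc.le (by rw [hs]; exact (hF n hgf).trans hwF))
      have hpos : 0 < α + β := by
        by_contra h0
        obtain ⟨rfl, rfl⟩ : α = 0 ∧ β = 0 := by omega
        simp at hne
      refine le_trans (le_trans (encard_le_of_fixed_coef (x := x) (y := y) (n := n) α β ?_)
        (hA.short (h - α - β) (by omega) _)) hgf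
      rintro s ⟨g1, g2, g3⟩
      obtain ⟨α', β', t', ht', rfl⟩ := exists_decomp s g2
      refine ⟨g1, g3, t', ht', ?_⟩
      simp only [Multiset.card_add, Multiset.card_replicate] at g1
      have := hsim α' β' α β t' t ht' ht (by omega) (by omega) (g3.trans hs.symm)
      rcases coef_eq_of_eq (by omega) (by omega) this with ⟨rfl, rfl⟩ | ⟨rfl, rfl, rfl, rfl⟩ | ⟨rfl, rfl, rfl, rfl⟩
      · rfl
      all_goals simp at hne
    · -- every representation of `n` is either old or the new representation of `u`
      push Not at hn
      have hsub : ∀ s ∈ msRep (insert x (insert y A)) h n, s ∈ msRep A h n ∨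
          (n = u ∧ s = Multiset.replicate H x + {y}) := by
        rintro s ⟨g1, g2, g3⟩
        obtain ⟨α, β, t, ht, rfl⟩ := exists_decomp s g2
        simp only [Multiset.card_add, Multiset.card_replicate] at g1
        have h0 := hn α β t ht g1 g3
        rcases coef_eq_of_eq (H := H) (α := α) (β := β) (α' := 0) (β' := 0)
          (by omega) (by omega) (by simpa using h0) with
          ⟨rfl, rfl⟩ | ⟨rfl, rfl, -, -⟩ | ⟨rfl, rfl, -, -⟩
        · left; exact ⟨by simpa using g1, by simpa using ht, by simpa using g3⟩
        · right
          have : t = 0 := Multiset.card_eq_zero.mp (by omega)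
          subst this
          refine ⟨?_, by simp⟩
          rw [← g3]; simp [hy]
        · left; exact ⟨by simpa using g1, by simpa using ht, by simpa using g3⟩
      by_cases hnu : n = u
      · subst hnu
        refine le_trans (Set.encard_le_encard
          (t := insert (Multiset.replicate H x + {y}) (msRep A h n)) ?_)
          ((Set.encard_insert_le _ _).trans (Order.add_one_le_of_lt hu))
        intro s hs
        rcases hsub s hs with h | ⟨-, h⟩
        exacts [Or.inr h, Or.inl h]
      · refine le_trans (Set.encard_le_encard fun s hs => ?_) (hA.full n)
        exact (hsub s hs).resolve_right fun h => hnu h.1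
  · rw [← Set.encard_insert_of_notMem (a := Multiset.replicate H x + {y})]
    · refine Set.encard_le_encard ?_
      rintro s (rfl | hs)
      · refine ⟨by simp [hh], ?_, by simp [hy]⟩
        intro a ha
        rcases Multiset.mem_add.mp ha with ha | ha
        · exact Or.inl (Multiset.eq_of_mem_replicate ha)
        · exact Or.inr (Or.inl (Multiset.mem_singleton.mp ha))
      · exact msRep_mono ((Set.subset_insert _ _).trans (Set.subset_insert _ _)) _ _ hs
    · rintro ⟨-, h2, -⟩
      exact hxA (h2 x (by simp [Multiset.mem_replicate]; omega))

/-! ### Passing to the limit -/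

/-- A bound valid at every stage passes to the union, since a finite family of representations over an
increasing union already lives in one stage. -/
theorem msRep_iUnion {A : ℕ → Set ℤ} (hA : Monotone A) {h : ℕ} {n : ℤ} {N : ℕ∞}
    (hN : ∀ k, (msRep (A k) h n).encard ≤ N) : (msRep (⋃ k, A k) h n).encard ≤ N := by
  by_contra! hlt
  lift N to ℕ using hlt.ne_top
  obtain ⟨S, hS, hcard⟩ := Set.exists_subset_encard_eq (Order.add_one_le_of_lt hlt)
  have hSfin : S.Finite := Set.finite_of_encard_eq_coe (k := N + 1) (by rw [hcard]; rfl)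
  have hev : ∀ s ∈ S, ∀ᶠ k in atTop, s ∈ msRep (A k) h n := by
    intro s hs
    obtain ⟨h1, h2, h3⟩ := hS hs
    have : ∀ᶠ k in atTop, ∀ a ∈ s.toFinset, a ∈ A k := by
      rw [Filter.eventually_all_finset]
      intro a ha
      obtain ⟨k, hk⟩ := Set.mem_iUnion.mp (h2 a (Multiset.mem_toFinset.mp ha))
      exact eventually_atTop.mpr ⟨k, fun j hj => hA hj hk⟩
    filter_upwards [this] with k hk
    exact ⟨h1, fun a ha => hk a (Multiset.mem_toFinset.mpr ha), h3⟩
  obtain ⟨k, hk⟩ := ((hSfin.eventually_all).mpr hev).exists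
  have := (Set.encard_le_encard (show S ⊆ msRep (A k) h n from hk)).trans (hN k)
  rw [hcard] at this
  norm_cast at this
  omega

/-- Raising the count of every integer `u` again and again, as long as it is below `f u`, gives
exactly `f` in the union. -/
theorem Good.exists_extension {H g : ℕ} (hH : 1 ≤ H) {f : ℤ → ℕ∞}
    (hf : ∀ᶠ n in cofinite, (g : ℕ∞) ≤ f n)
    {C : Set ℤ} (hC : Good (32 * (H + 1) ^ 3) (H + 1) g f C) :
    ∃ A, C ⊆ A ∧ ∀ n, (msRep A (H + 1) n).encard = f n := by
  have hstep : ∀ (A : {A // Good (32 * (H + 1) ^ 3) (H + 1) g f A}) (u : ℤ),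
      ∃ A' : {A // Good (32 * (H + 1) ^ 3) (H + 1) g f A}, A.1 ⊆ A'.1 ∧
      ((msRep A.1 (H + 1) u).encard < f u →
        (msRep A.1 (H + 1) u).encard + 1 ≤ (msRep A'.1 (H + 1) u).encard) := by
    intro A u
    by_cases hu : (msRep A.1 (H + 1) u).encard < f u
    · obtain ⟨A', h1, h2, h3⟩ := A.2.step hH hf hu
      exact ⟨⟨A', h2⟩, h1, fun _ => h3⟩
    · exact ⟨A, subset_rfl, fun h => absurd h hu⟩
  choose next hsub hnext using hstep
  -- `target k` runs through every integer infinitely often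
  let target : ℕ → ℤ := fun k => ((Denumerable.eqv (ℤ × ℕ)).symm k).1
  let A : ℕ → {A // Good (32 * (H + 1) ^ 3) (H + 1) g f A} :=
    fun k => Nat.rec ⟨C, hC⟩ (fun k A => next A (target k)) k
  have hmono : Monotone fun k => (A k).1 := monotone_nat_of_le_succ fun k => hsub (A k) (target k)
  refine ⟨⋃ k, (A k).1, Set.subset_iUnion (fun k => (A k).1) 0, fun n => ?_⟩
  apply le_antisymm (msRep_iUnion hmono fun k => (A k).2.full n)
  -- otherwise every visit to `n` raises its count, although the counts stay below a finite value
  by_contra! hlt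
  have hle : ∀ k, (msRep (A k).1 (H + 1) n).encard
      ≤ (msRep (⋃ k, (A k).1) (H + 1) n).encard := fun k =>
    Set.encard_le_encard (msRep_mono (Set.subset_iUnion (fun k => (A k).1) k) _ _)
  have hgrow : ∀ j : ℕ, ∃ k, (j : ℕ∞) ≤ (msRep (A k).1 (H + 1) n).encard := by
    intro j
    induction j with
    | zero => exact ⟨0, by simp⟩
    | succ j ih =>
      obtain ⟨k, hk⟩ := ih
      obtain ⟨l, hkl, hl⟩ : ∃ l, k ≤ l ∧ target l = n := by
        have hinj : Function.Injective fun i : ℕ => Denumerable.eqv (ℤ × ℕ) (n, i) :=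
          fun a b hab => by simpa using (Denumerable.eqv (ℤ × ℕ)).injective hab
        obtain ⟨i, hi⟩ := hinj.nat_tendsto_atTop.eventually_ge_atTop k |>.exists
        exact ⟨_, hi, by simp only [target, Equiv.symm_apply_apply]⟩
      refine ⟨l + 1, ?_⟩
      have h1 := hnext (A l) n (lt_of_le_of_lt (hle l) hlt)
      rw [← hl] at h1 ⊢
      refine le_trans ?_ h1
      rw [hl]
      push_cast
      gcongr
      exact hk.trans (Set.encard_le_encard (msRep_mono (hmono hkl) _ _))
  obtain ⟨N, hN⟩ := ENat.ne_top_iff_exists.mp hlt.ne_top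
  obtain ⟨k, hk⟩ := hgrow (N + 1)
  have := hk.trans (hle k)
  rw [← hN] at this
  norm_cast at this
  omega

/-! ### Prescribed representation functions -/

theorem stmt_0 (h g : ℕ) (hh : 2 ≤ h) (hg : 1 ≤ g)
    (f : ℤ → ℕ∞) (hf : (g : ℕ∞) ≤ Filter.liminf f Filter.cofinite)
    (B : Set ℤ) (hBnonneg : ∀ b ∈ B, 0 ≤ b)
    (hB : ∀ n : ℤ, 0 ≤ n → repFn B h n ≤ g)
    (ε : ℝ → ℝ) (hεpos : ∀ x : ℝ, 1 ≤ x → 0 < ε x)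
    (hεdec : AntitoneOn ε (Set.Ici (1 : ℝ)))
    (hεlim : Filter.Tendsto ε Filter.atTop (nhds 0)) :
    ∃ A : Set ℤ, (∀ n : ℤ, repFn A h n = f n) ∧
      ∃ C : ℝ, 0 < C ∧
        ∀ᶠ x in Filter.atTop, C * (countLe B (x * ε x) : ℝ) ≤ (countAbs A x : ℝ) := by
  have hfev : ∀ᶠ n in cofinite, (g : ℕ∞) ≤ f n := by
    have h1 : ((g - 1 : ℕ) : ℕ∞) < liminf f cofinite :=
      lt_of_lt_of_le (by exact_mod_cast (by omega : g - 1 < g)) hf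
    filter_upwards [eventually_lt_of_lt_liminf h1] with n hn
    have := Order.add_one_le_of_lt hn
    have hcast : (((g - 1 : ℕ) : ℕ∞) + 1) = g := by exact_mod_cast Nat.sub_add_cancel hg
    rwa [hcast] at this
  obtain ⟨N, hN⟩ : ∃ N : ℕ, ∀ n : ℤ, (N : ℤ) ≤ n → (g : ℕ∞) ≤ f n := by
    have hfin : {n | ¬ (g : ℕ∞) ≤ f n}.Finite := hfev
    obtain ⟨F, hF⟩ := hfin.bddAbove
    refine ⟨(F + 1).toNat, fun n hn => ?_⟩
    by_contra hgf
    have := hF hgf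
    omega
  obtain ⟨H, rfl⟩ : ∃ H, h = H + 1 := ⟨h - 1, by omega⟩
  obtain ⟨C, hCg, hCN, hCgap, hCcount⟩ := exists_gappy (h := H + 1) (K := 32 * (H + 1) ^ 3)
    (by omega) (Nat.mul_pos (by norm_num) (by positivity))
    (by nlinarith [Nat.le_self_pow (n := 3) (by norm_num) (H + 1)]) N hBnonneg hB hεlim
  have hgood : Good (32 * (H + 1) ^ 3) (H + 1) g f C := by
    refine ⟨hCgap, fun m hm n => msRep_le_of_le hg hCg hm.le n, fun n => ?_⟩
    rcases (msRep C (H + 1) n).eq_empty_or_nonempty with he | ⟨s, h1, h2, h3⟩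
    · simp [he]
    refine (hCg n).trans (hN n ?_)
    have := Multiset.card_nsmul_le_sum (s := s) (a := (N : ℤ)) fun a ha => hCN a (h2 a ha)
    rw [h1, h3, nsmul_eq_mul] at this
    push_cast at this
    nlinarith [mul_nonneg (Int.natCast_nonneg H) (Int.natCast_nonneg N)]
  obtain ⟨A, hCA, hA⟩ := hgood.exists_extension (by omega) hfev
  refine ⟨A, fun n => by rw [repFn_eq, hA], 1, one_pos, ?_⟩
  filter_upwards [hCcount] with x hx
  rw [one_mul]
  have : countAbs C x ≤ countAbs A x :=
    Set.ncard_le_ncard (fun a ha => ⟨hCA ha.1, ha.2⟩) (finite_abs_le A x)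
  exact_mod_cast hx.trans this
end

section
/- Let f : ℤ → ℕ ∪ {∞} be any function such that liminf_{|n|→∞} f(n) ≥ 1. Then there exists a set A of integers such that r_{A,2}(n) = f(n) for all n ∈ ℤ and A(x) ≫ x^{√2 − 1 + o(1)}, i.e. for every δ > 0 one has A(x) ≥ x^{√2 − 1 − δ} for all sufficiently large x. -/
/-!
The set `A` is a very sparse modification of an infinite Sidon set of multiples of `3`, whose counting
function has exponent `√2 - 1`.

**The Sidon set.** Such sets are due to Ruzsa; the version used here is Cilleruelo's. Fix primes `q_j`
of size about `4 ^ j` and primitive roots modulo them. A prime `p` of size about `2 ^ (c k²)`, where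
`c = √2 - 1`, is encoded by its first `k` discrete logarithms, written as the digits of one integer
`code p ≤ 2 ^ (k² + 4 k)`. A coincidence `code a + code b = code c + code d` can be read digit by digit
and turns into congruences: `a b ≡ c d` modulo the product `Q` of the first `k₂` moduli and `a ≡ c`
modulo the product `R` of the moduli with index in `[k₂, k₁)`, where `k₂ ≤ k₁` are the two numbers of
digits. If `a b = c d`, unique factorization makes the coincidence trivial (`code_sidon`). Otherwise
`a` divides `s Q - t R` for certain small nonzero integers `s` and `t` (`mul_eq_of_code`). There are few
such pairs, hence few such primes `a` (`card_bad₂_le`); the value of `c` is the largest for which they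
are negligible among all primes of their size (`exponent_bound`), and discarding them leaves a Sidon set
with the right counting function (`exists_sidon`).

**Prescribing representations.** Let `D` be the set of triples of the elements of the Sidon set that
exceed a bound chosen so that no sum of two elements of `D` lies in the finite set `F` of zeros of `f`.
Infinitely many stages each do two things. If some target integer `n` has too few representations, add
two huge integers, prime to `3`, with sum `n`; this creates one representation of `n`, and all other new
sums are represented once and lie outside `F` (`exists_pair`). Then add the next elements of `D`, except
those that would create an unwanted coincidence with the set `S` of auxiliary integers added so far
(`le_insert`). By the Sidon property there are only `O((|S| + 1)³)` exceptions (`ncard_badSet_le`). In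
stage `j` the elements of `D` up to `2 ^ j` are treated and `|S| ≤ 2 j + 2`, so only `O((log x)³)`
elements of `D` up to `x` are lost (`exists_set`).
-/

open Filter Set

/-! ### Mixed radix expansions -/

lemma mixedRadix_lt (b u : ℕ → ℕ) (hu : ∀ j, u j < b j) (K : ℕ) :
    ∑ j ∈ Finset.range K, u j * ∏ i ∈ Finset.range j, b i < ∏ i ∈ Finset.range K, b i := by
  induction K with
  | zero => simp
  | succ K ih =>
    rw [Finset.sum_range_succ, Finset.prod_range_succ]
    have := hu K
    nlinarith [Nat.mul_le_mul_left (∏ i ∈ Finset.range K, b i) (Nat.succ_le_of_lt this)]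

lemma mixedRadix_inj (b u v : ℕ → ℕ) (hu : ∀ j, u j < b j) (hv : ∀ j, v j < b j) (K : ℕ)
    (h : ∑ j ∈ Finset.range K, u j * ∏ i ∈ Finset.range j, b i
      = ∑ j ∈ Finset.range K, v j * ∏ i ∈ Finset.range j, b i) :
    ∀ j < K, u j = v j := by
  induction K with
  | zero => simp
  | succ K ih =>
    rw [Finset.sum_range_succ, Finset.sum_range_succ] at h
    have h1 := mixedRadix_lt b u hu K
    have h2 := mixedRadix_lt b v hv K
    have hpos : 0 < ∏ i ∈ Finset.range K, b i := by omega
    have hK : u K = v K := by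
      have e1 := congrArg (· / ∏ i ∈ Finset.range K, b i) h
      simpa [Nat.add_mul_div_right _ _ hpos, Nat.div_eq_of_lt h1, Nat.div_eq_of_lt h2] using e1
    rw [hK] at h
    intro j hj
    rcases Nat.lt_succ_iff_lt_or_eq.mp hj with hj | rfl
    · exact ih (by omega) j hj
    · exact hK

/-! ### Prime moduli and discrete logarithms -/

lemma exists_modulus (j : ℕ) : ∃ q : ℕ, q.Prime ∧ 4 ^ (j + 1) < q ∧ q ≤ 2 * 4 ^ (j + 1) :=
  Nat.exists_prime_lt_and_le_two_mul _ (by positivity)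

/-- The `j`-th modulus: a prime in `(4 ^ (j + 1), 2 * 4 ^ (j + 1)]`. -/
noncomputable def modulus (j : ℕ) : ℕ := (exists_modulus j).choose

lemma modulus_prime (j : ℕ) : (modulus j).Prime := (exists_modulus j).choose_spec.1
lemma lt_modulus (j : ℕ) : 4 ^ (j + 1) < modulus j := (exists_modulus j).choose_spec.2.1
lemma modulus_le (j : ℕ) : modulus j ≤ 2 * 4 ^ (j + 1) := (exists_modulus j).choose_spec.2.2

lemma modulus_strictMono : StrictMono modulus := by
  refine strictMono_nat_of_lt_succ fun j => ?_
  have h1 := modulus_le j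
  have h2 := lt_modulus (j + 1)
  rw [pow_succ] at h2
  have : 0 < 4 ^ (j + 1) := by positivity
  omega

lemma exists_dlog (q : ℕ) (hq : q.Prime) : ∃ (g : ZMod q) (l : ℕ → ℕ),
    (∀ n, l n < q) ∧ ∀ n : ℕ, ¬ q ∣ n → g ^ l n = (n : ZMod q) := by
  have : Fact q.Prime := ⟨hq⟩
  obtain ⟨g, hg⟩ := IsCyclic.exists_generator (α := (ZMod q)ˣ)
  have key : ∀ n : ℕ, ∃ m < q, ¬ q ∣ n → (g : ZMod q) ^ m = (n : ZMod q) := by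
    intro n
    by_cases hn : q ∣ n
    · exact ⟨0, hq.pos, fun h => absurd hn h⟩
    · have hn0 : (n : ZMod q) ≠ 0 := by rwa [Ne, ZMod.natCast_eq_zero_iff]
      have hm := hg (Units.mk0 _ hn0)
      rw [mem_zpowers_iff_mem_range_orderOf] at hm
      simp only [Finset.mem_image, Finset.mem_range] at hm
      obtain ⟨m, hm, h⟩ := hm
      refine ⟨m, hm.trans_le ?_, fun _ => ?_⟩
      · have := orderOf_le_card_univ (x := g)
        rw [ZMod.card_units] at this
        omega
      · rw [← Units.val_pow_eq_pow_val, h]; rfl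
  choose l hl using key
  exact ⟨g, l, fun n => (hl n).1, fun n => (hl n).2⟩

/-- A primitive root modulo `modulus j`. -/
noncomputable def root (j : ℕ) : ZMod (modulus j) := (exists_dlog _ (modulus_prime j)).choose

/-- The discrete logarithm to base `root j`, with an arbitrary value at multiples of the modulus. -/
noncomputable def dlog (j : ℕ) : ℕ → ℕ := (exists_dlog _ (modulus_prime j)).choose_spec.choose

lemma dlog_lt (j n : ℕ) : dlog j n < modulus j :=
  (exists_dlog _ (modulus_prime j)).choose_spec.choose_spec.1 n

lemma root_pow_dlog (j n : ℕ) (h : ¬ modulus j ∣ n) :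
    root j ^ dlog j n = (n : ZMod (modulus j)) :=
  (exists_dlog _ (modulus_prime j)).choose_spec.choose_spec.2 n h

/-- The product of the first `k` moduli. -/
noncomputable def modProd (k : ℕ) : ℕ := ∏ j ∈ Finset.range k, modulus j

/-- The product of the moduli with index in `[k₂, k₁)`. -/
noncomputable def modProdIco (k₂ k₁ : ℕ) : ℕ := ∏ j ∈ Finset.Ico k₂ k₁, modulus j

lemma modProd_pos (k : ℕ) : 0 < modProd k := Finset.prod_pos fun j _ => (modulus_prime j).pos

lemma modProdIco_pos (k₂ k₁ : ℕ) : 0 < modProdIco k₂ k₁ :=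
  Finset.prod_pos fun j _ => (modulus_prime j).pos

lemma modProd_mul (k₂ k₁ : ℕ) (h : k₂ ≤ k₁) : modProd k₂ * modProdIco k₂ k₁ = modProd k₁ :=
  Finset.prod_range_mul_prod_Ico _ h

lemma le_modProd (k : ℕ) : 2 ^ (k ^ 2 + k) ≤ modProd k := by
  induction k with
  | zero => simp [modProd]
  | succ k ih =>
    have : modProd (k + 1) = modProd k * modulus k := Finset.prod_range_succ _ _
    rw [this]
    calc 2 ^ ((k + 1) ^ 2 + (k + 1)) = 2 ^ (k ^ 2 + k) * 4 ^ (k + 1) := by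
          rw [show (4 : ℕ) = 2 ^ 2 by norm_num, ← pow_mul, ← pow_add]; ring_nf
      _ ≤ _ := Nat.mul_le_mul ih (lt_modulus k).le

lemma prod_four_mul_modulus_le (k : ℕ) :
    ∏ j ∈ Finset.range k, (4 * modulus j) ≤ 2 ^ (k ^ 2 + 4 * k) := by
  induction k with
  | zero => simp
  | succ k ih =>
    rw [Finset.prod_range_succ]
    calc _ ≤ 2 ^ (k ^ 2 + 4 * k) * (4 * (2 * 4 ^ (k + 1))) :=
          Nat.mul_le_mul ih (Nat.mul_le_mul_left _ (modulus_le k))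
      _ = _ := by
          rw [show (4 * (2 * 4 ^ (k + 1)) : ℕ) = 2 ^ (2 * k + 5) by
            rw [show (4 : ℕ) = 2 ^ 2 by norm_num, ← pow_mul]; ring, ← pow_add]
          ring_nf

lemma prod_modulus_dvd (s : Finset ℕ) (z : ℤ) (h : ∀ j ∈ s, (modulus j : ℤ) ∣ z) :
    ((∏ j ∈ s, modulus j : ℕ) : ℤ) ∣ z := by
  push_cast
  refine Finset.prod_dvd_of_coprime ?_ h
  intro i _ j _ hij
  exact Nat.isCoprime_iff_coprime.mpr ((Nat.coprime_primes (modulus_prime i) (modulus_prime j)).mpr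
    (fun h => hij (modulus_strictMono.injective h)))

lemma modulus_dvd_iff (j : ℕ) (a b : ℤ) :
    (modulus j : ℤ) ∣ a - b ↔ (a : ZMod (modulus j)) = (b : ZMod (modulus j)) := by
  rw [eq_comm, ZMod.intCast_eq_intCast_iff_dvd_sub]

/-! ### Codes of primes -/

/-- The exponent `√2 - 1`. -/
noncomputable def cexp : ℝ := Real.sqrt 2 - 1

lemma cexp_sq : cexp ^ 2 = 1 - 2 * cexp := by
  have := Real.sq_sqrt (show (0 : ℝ) ≤ 2 by norm_num)
  unfold cexp; nlinarith

lemma cexp_gt : 0.41 < cexp := by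
  have : (1.41 : ℝ) < Real.sqrt 2 := Real.lt_sqrt_of_sq_lt (by norm_num)
  unfold cexp; linarith

lemma cexp_lt : cexp < 0.42 := by
  have : Real.sqrt 2 < (1.42 : ℝ) := by
    rw [Real.sqrt_lt' (by norm_num)]; norm_num
  unfold cexp; linarith

/-- The threshold `2 ^ (c k² - k)` bounding the primes whose code has at most `k` digits. -/
noncomputable def thr (k : ℕ) : ℝ := (2 : ℝ) ^ (cexp * (k : ℝ) ^ 2 - k)

lemma thr_pos (k : ℕ) : 0 < thr k := by unfold thr; positivity

lemma two_pow_le_thr (k : ℕ) (hk : 5 ≤ k) : (2 : ℝ) ^ k ≤ thr k := by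
  unfold thr
  rw [← Real.rpow_natCast]
  refine Real.rpow_le_rpow_of_exponent_le (by norm_num) ?_
  have := cexp_gt
  have h5 : (5 : ℝ) ≤ k := by exact_mod_cast hk
  nlinarith [mul_le_mul h5 h5 (by norm_num) (by linarith)]

lemma exists_le_thr (n : ℕ) : ∃ k, (n : ℝ) ≤ thr k := by
  refine ⟨n + 5, ?_⟩
  refine le_trans ?_ (two_pow_le_thr (n + 5) (by omega))
  have : n + 5 < 2 ^ (n + 5) := Nat.lt_two_pow_self
  exact_mod_cast (by omega : n ≤ 2 ^ (n + 5))

open Classical in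
/-- The number of digits of the code of `n`. -/
noncomputable def level (n : ℕ) : ℕ := Nat.find (exists_le_thr n)

lemma le_thr_level (n : ℕ) : (n : ℝ) ≤ thr (level n) := by
  classical exact Nat.find_spec (exists_le_thr n)

lemma level_le {n k : ℕ} (h : (n : ℝ) ≤ thr k) : level n ≤ k := by
  classical exact Nat.find_min' (exists_le_thr n) h

/-- The `j`-th digit of the code of `n`.  Digits are shifted into `[q, 2q)` inside base `4q`, so that
two codes are added without carries and a sum of two digits shows how many of them are present. -/
noncomputable def dig (n j : ℕ) : ℕ := if j < level n then modulus j + dlog j n else 0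

lemma dig_lt (n j : ℕ) : dig n j < 2 * modulus j := by
  unfold dig
  have := dlog_lt j n
  split_ifs <;> omega

/-- The code of `n`: the number with digits `dig n j` in the bases `4 * modulus j`. -/
noncomputable def code (n : ℕ) : ℕ :=
  ∑ j ∈ Finset.range (level n), dig n j * ∏ i ∈ Finset.range j, (4 * modulus i)

lemma code_eq (n K : ℕ) (h : level n ≤ K) :
    code n = ∑ j ∈ Finset.range K, dig n j * ∏ i ∈ Finset.range j, (4 * modulus i) := by
  unfold code
  refine Finset.sum_subset (Finset.range_mono h) fun j _ hj => ?_
  simp only [Finset.mem_range] at hj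
  simp [dig, hj]

lemma code_lt (n K : ℕ) (h : level n ≤ K) : code n < 2 ^ (K ^ 2 + 4 * K) := by
  rw [code_eq n K h]
  refine lt_of_lt_of_le (mixedRadix_lt (fun i => 4 * modulus i) (dig n) (fun j => ?_) K)
    (prod_four_mul_modulus_le K)
  have := dig_lt n j
  omega

/-- The sum of two codes determines all sums of corresponding digits, because two digits below
`2 * modulus j` are added without carry in base `4 * modulus j`. -/
lemma dig_add_eq {a b c d : ℕ} (h : code a + code b = code c + code d) (j : ℕ) :
    dig a j + dig b j = dig c j + dig d j := by
  obtain ⟨K, hK⟩ : ∃ K, K = level a + level b + level c + level d + j + 1 := ⟨_, rfl⟩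
  rw [code_eq a K (by omega), code_eq b K (by omega), code_eq c K (by omega),
    code_eq d K (by omega), ← Finset.sum_add_distrib, ← Finset.sum_add_distrib] at h
  simp only [← add_mul] at h
  refine mixedRadix_inj (fun i => 4 * modulus i) (fun j => dig a j + dig b j)
    (fun j => dig c j + dig d j) ?_ ?_ K h j (by omega)
  · intro j
    have := dig_lt a j
    have := dig_lt b j
    omega
  · intro j
    have := dig_lt c j
    have := dig_lt d j
    omega

/-- The levels can be read off from the digit sums: a sum of two digits is at least
`2 * modulus j`, in `[modulus j, 2 * modulus j)`, or `0` according to the number of them present. -/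
lemma level_eq_of_code {a b c d : ℕ} (h : ∀ j, dig a j + dig b j = dig c j + dig d j)
    (hab : level b ≤ level a) (hcd : level d ≤ level c) :
    level a = level c ∧ level b = level d := by
  have pos : ∀ n j, j < level n → modulus j ≤ dig n j := fun n j hj => by simp [dig, hj]
  have zero : ∀ n j, level n ≤ j → dig n j = 0 := fun n j hj => by simp [dig, hj]
  constructor
  · rcases lt_trichotomy (level a) (level c) with hlt | heq | hlt
    · have := h (level a)
      have := pos c _ hlt
      have := zero a _ le_rfl
      have := zero b _ hab
      have := (modulus_prime (level a)).pos
      omega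
    · exact heq
    · have := h (level c)
      have := pos a _ hlt
      have := zero c _ le_rfl
      have := zero d _ hcd
      have := (modulus_prime (level c)).pos
      omega
  · rcases lt_trichotomy (level b) (level d) with hlt | heq | hlt
    · have := h (level b)
      have := pos d _ hlt
      have := pos c _ (hlt.trans_le hcd)
      have := zero b _ le_rfl
      have := dig_lt a (level b)
      omega
    · exact heq
    · have := h (level d)
      have := pos b _ hlt
      have := pos a _ (hlt.trans_le hab)
      have := zero d _ le_rfl
      have := dig_lt c (level d)
      omega

/-- None of the moduli used in the code of `n` divides `n`, so that all its digits are genuine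
discrete logarithms. -/
def Admissible (n : ℕ) : Prop := ∀ j < level n, ¬ modulus j ∣ n

/-- At the places where only the longer codes have digits, `a` and `c` have the same discrete
logarithm, hence the same residue. -/
lemma dvd_sub_of_dig {a b c d : ℕ} (ha : Admissible a) (hc : Admissible c)
    (h : ∀ j, dig a j + dig b j = dig c j + dig d j)
    (hac : level a = level c) (hbd : level b = level d) :
    (modProdIco (level b) (level a) : ℤ) ∣ (a : ℤ) - c := by
  refine prod_modulus_dvd _ _ fun j hj => ?_
  rw [Finset.mem_Ico] at hj
  have e := h j
  simp only [dig, ← hac, ← hbd, hj.2, not_lt.mpr hj.1, if_true, if_false] at e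
  have e' : dlog j a = dlog j c := by omega
  rw [modulus_dvd_iff]
  push_cast
  rw [← root_pow_dlog j a (ha j hj.2), ← root_pow_dlog j c (hc j (hac ▸ hj.2)), e']

/-- At the places where all codes have digits, the discrete logarithms of `a` and `b` have the same
sum as those of `c` and `d`, so that `a * b` and `c * d` have the same residue. -/
lemma dvd_mul_sub_of_dig {a b c d : ℕ} (ha : Admissible a) (hb : Admissible b)
    (hc : Admissible c) (hd : Admissible d)
    (h : ∀ j, dig a j + dig b j = dig c j + dig d j) (hab : level b ≤ level a)
    (hac : level a = level c) (hbd : level b = level d) :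
    (modProd (level b) : ℤ) ∣ (a : ℤ) * b - c * d := by
  refine prod_modulus_dvd _ _ fun j hj => ?_
  rw [Finset.mem_range] at hj
  have hja := hj.trans_le hab
  have e := h j
  simp only [dig, ← hac, ← hbd, hj, hja, if_true] at e
  have e' : dlog j a + dlog j b = dlog j c + dlog j d := by omega
  rw [modulus_dvd_iff]
  push_cast
  rw [← root_pow_dlog j a (ha j hja), ← root_pow_dlog j b (hb j hj),
    ← root_pow_dlog j c (hc j (hac ▸ hja)), ← root_pow_dlog j d (hd j (hbd ▸ hj)),
    ← pow_add, ← pow_add, e']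

/-- Nonzero integers of absolute value at most `U`. -/
noncomputable def nzIcc (U : ℕ) : Finset ℤ := (Finset.Icc (-(U : ℤ)) U).erase 0

lemma card_nzIcc (U : ℕ) : (nzIcc U).card = 2 * U := by
  unfold nzIcc
  rw [Finset.card_erase_of_mem (by simp), Int.card_Icc]
  omega

lemma mem_nzIcc {U : ℕ} {s : ℤ} (h0 : s ≠ 0) (h : s.natAbs ≤ U) : s ∈ nzIcc U := by
  simp only [nzIcc, Finset.mem_erase, Finset.mem_Icc]
  omega

/-- The largest integer not exceeding `thr k`. -/
noncomputable def nthr (k : ℕ) : ℕ := ⌊thr k⌋₊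

/-- A finite set containing, for every nontrivial coincidence of sums of codes of two primes of
levels `k₁ ≥ k₂`, the prime of level `k₁`; see `mul_eq_of_code`. It is defined without reference to
codes so that it can be counted. -/
noncomputable def bad₂ (k₁ k₂ : ℕ) : Finset ℕ :=
  (nzIcc (nthr k₁ * nthr k₂ / modProd k₂) ×ˢ nzIcc (nthr k₁ * nthr k₂ / modProdIco k₂ k₁)).biUnion
    fun z => (z.1 * modProd k₂ - z.2 * modProdIco k₂ k₁).natAbs.primeFactors

/-- The primes to be discarded if their level is `k`. -/
noncomputable def bad (k : ℕ) : Finset ℕ := (Finset.range (k + 1)).biUnion (bad₂ k)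

lemma le_nthr_level (n : ℕ) : n ≤ nthr (level n) := Nat.le_floor (le_thr_level n)

lemma thr_le_modProd (k : ℕ) : thr k ≤ modProd k := by
  have h := le_modProd k
  have h' : (2 : ℝ) ^ (k ^ 2 + k) ≤ modProd k := by exact_mod_cast h
  refine le_trans ?_ h'
  unfold thr
  rw [← Real.rpow_natCast 2 (k ^ 2 + k)]
  refine Real.rpow_le_rpow_of_exponent_le (by norm_num) ?_
  push_cast
  have := cexp_lt
  nlinarith [sq_nonneg (k : ℝ), (Nat.cast_nonneg k : (0 : ℝ) ≤ k)]

lemma le_modProd_level (n : ℕ) : n ≤ modProd (level n) := by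
  exact_mod_cast (le_thr_level n).trans (thr_le_modProd _)

/-- Two positive integers of the same level agree if they are congruent modulo all moduli below
their level. -/
lemma eq_of_modProd_dvd {a c : ℕ} (ha : 0 < a) (hc : 0 < c) (h : level a = level c)
    (hd : (modProd (level a) : ℤ) ∣ (a : ℤ) - c) : a = c := by
  have h1 := le_modProd_level a
  have h2 := le_modProd_level c
  rw [← h] at h2
  by_contra hne
  have h3 := Int.le_of_dvd (b := |(a : ℤ) - c|) (abs_pos.mpr (by omega)) ((dvd_abs _ _).mpr hd)
  have : |(a : ℤ) - c| < modProd (level a) := by rw [abs_lt]; constructor <;> omega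
  omega

lemma natAbs_le_div {s : ℤ} {Q M : ℕ} (hQ : 0 < Q) (h : |s * Q| ≤ M) : s.natAbs ≤ M / Q := by
  rw [Nat.le_div_iff_mul_le hQ]
  zify
  rwa [abs_mul, Nat.abs_cast] at h

/-- The primes whose codes make up the Sidon set. -/
def Good_s1 (p : ℕ) : Prop := p.Prime ∧ Admissible p ∧ p ∉ bad (level p)

/-- The products of good primes with the same sum of codes agree. Write `Q` for the product of the
moduli below `level b` and `R` for that of the remaining moduli below `level a`. If
`a * b - c * d = s * Q` is not zero, neither is `d * (a - c) = t * R`, and `a` divides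
`s * Q - t * R = a * (b - d)`, which puts `a` into `bad (level a)`. -/
lemma mul_eq_of_code {a b c d : ℕ} (ha : Good_s1 a) (hb : Good_s1 b) (hc : Good_s1 c) (hd : Good_s1 d)
    (h : ∀ j, dig a j + dig b j = dig c j + dig d j)
    (hab : level b ≤ level a) (hcd : level d ≤ level c) : a * b = c * d := by
  obtain ⟨hac, hbd⟩ := level_eq_of_code h hab hcd
  by_contra hne
  have hneZ : (a : ℤ) * b - c * d ≠ 0 := by
    intro h0; apply hne; zify; linarith
  have hR := dvd_sub_of_dig ha.2.1 hc.2.1 h hac hbd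
  have hQ := dvd_mul_sub_of_dig ha.2.1 hb.2.1 hc.2.1 hd.2.1 h hab hac hbd
  -- if `b = d`, then `a` and `c` have the same digits; replacing `b` and `d` by `0`, which has no
  -- digits, yields a congruence between `a` and `c` to all moduli below their level
  have hbd' : b ≠ d := by
    intro hbd'
    subst hbd'
    have hj : ∀ j, dig a j = dig c j := fun j => by have := h j; omega
    have := dvd_sub_of_dig (b := 0) (d := 0) ha.2.1 hc.2.1 (fun j => by rw [hj]) hac rfl
    have l0 : level 0 = 0 := Nat.le_zero.mp (level_le (by simpa using (thr_pos 0).le))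
    rw [l0] at this
    have e : modProdIco 0 (level a) = modProd (level a) := by simp [modProdIco, modProd]
    rw [e] at this
    exact hne (by rw [eq_of_modProd_dvd ha.1.pos hc.1.pos hac this])
  have hac' : a ≠ c := by
    intro hac'
    subst hac'
    have hj : ∀ j, dig b j = dig d j := fun j => by have := h j; omega
    have := dvd_sub_of_dig (b := 0) (d := 0) hb.2.1 hd.2.1 (fun j => by rw [hj]) hbd rfl
    have l0 : level 0 = 0 := Nat.le_zero.mp (level_le (by simpa using (thr_pos 0).le))
    rw [l0] at this
    have e : modProdIco 0 (level b) = modProd (level b) := by simp [modProdIco, modProd]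
    rw [e] at this
    exact hbd' (eq_of_modProd_dvd hb.1.pos hd.1.pos hbd this)
  obtain ⟨s, hs⟩ := hQ
  obtain ⟨t, ht⟩ := Dvd.dvd.mul_left hR (d : ℤ)
  have hQ0 : 0 < modProd (level b) := modProd_pos _
  have hR0 : 0 < modProdIco (level b) (level a) := modProdIco_pos _ _
  have hs0 : s ≠ 0 := by
    rintro rfl; rw [mul_zero] at hs; exact hneZ hs
  have ht0 : t ≠ 0 := by
    rintro rfl
    rw [mul_zero, mul_eq_zero] at ht
    have := hd.1.pos
    omega
  have la := le_nthr_level a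
  have lb := le_nthr_level b
  have lc := le_nthr_level c
  have ld := le_nthr_level d
  rw [← hac] at lc
  rw [← hbd] at ld
  have bound : ∀ x y x' y' : ℕ, x ≤ nthr (level a) → x' ≤ nthr (level a) →
      y ≤ nthr (level b) → y' ≤ nthr (level b) →
      |(x : ℤ) * y - x' * y'| ≤ (nthr (level a) * nthr (level b) : ℕ) := by
    intro x y x' y' h1 h2 h3 h4
    have e1 : ((x * y : ℕ) : ℤ) ≤ _ := Int.ofNat_le.mpr (Nat.mul_le_mul h1 h3)
    have e2 : ((x' * y' : ℕ) : ℤ) ≤ _ := Int.ofNat_le.mpr (Nat.mul_le_mul h2 h4)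
    have e3 : (0 : ℤ) ≤ (x * y : ℕ) := Int.natCast_nonneg _
    have e4 : (0 : ℤ) ≤ (x' * y' : ℕ) := Int.natCast_nonneg _
    rw [Nat.cast_mul] at e1 e2 e3 e4
    rw [abs_le]
    constructor <;> linarith
  -- `a * (b - d)` is the nonzero multiple of `a` exhibited by the definition of `bad₂`
  have key : s * modProd (level b) - t * modProdIco (level b) (level a) = a * ((b : ℤ) - d) := by
    linear_combination ht - hs
  apply ha.2.2
  refine Finset.mem_biUnion.mpr ⟨level b, Finset.mem_range.mpr (by omega), ?_⟩
  refine Finset.mem_biUnion.mpr ⟨(s, t), Finset.mem_product.mpr ⟨?_, ?_⟩, ?_⟩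
  · refine mem_nzIcc hs0 (natAbs_le_div hQ0 ?_)
    rw [mul_comm, ← hs]
    exact bound a b c d la lc lb ld
  · refine mem_nzIcc ht0 (natAbs_le_div hR0 ?_)
    rw [mul_comm, ← ht, show (d : ℤ) * (a - c) = a * d - c * d by ring]
    exact bound a d c d la lc ld ld
  · dsimp only
    rw [key]
    refine Nat.mem_primeFactors.mpr ⟨ha.1, ?_, ?_⟩
    · rw [← Int.natCast_dvd]
      exact Dvd.intro _ rfl
    · rw [Int.natAbs_ne_zero]
      refine mul_ne_zero ?_ ?_
      · have := ha.1.pos; omega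
      · omega

lemma code_sidon {a b c d : ℕ} (ha : Good_s1 a) (hb : Good_s1 b) (hc : Good_s1 c) (hd : Good_s1 d)
    (h : code a + code b = code c + code d) : (a = c ∧ b = d) ∨ (a = d ∧ b = c) := by
  wlog hab : level b ≤ level a generalizing a b
  · rcases this hb ha (by omega) (by omega) with h | h
    · exact Or.inr h.symm
    · exact Or.inl h.symm
  wlog hcd : level d ≤ level c generalizing c d
  · exact (this hd hc (by omega) (by omega)).symm
  have e := mul_eq_of_code ha hb hc hd (dig_add_eq h) hab hcd
  have hdvd : a ∣ c * d := ⟨b, e.symm⟩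
  rcases (Nat.Prime.dvd_mul ha.1).mp hdvd with h1 | h1
  · have := (Nat.prime_dvd_prime_iff_eq ha.1 hc.1).mp h1
    subst this
    exact Or.inl ⟨rfl, Nat.eq_of_mul_eq_mul_left ha.1.pos e⟩
  · have := (Nat.prime_dvd_prime_iff_eq ha.1 hd.1).mp h1
    subst this
    rw [mul_comm c a] at e
    exact Or.inr ⟨rfl, Nat.eq_of_mul_eq_mul_left ha.1.pos e⟩

/-! ### Counting the discarded primes -/

lemma two_pow_card_primeFactors_le (m : ℕ) (hm : m ≠ 0) : 2 ^ m.primeFactors.card ≤ m :=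
  calc 2 ^ m.primeFactors.card ≤ ∏ p ∈ m.primeFactors, p := by
        rw [← Finset.prod_const]
        exact Finset.prod_le_prod' fun p hp => (Nat.prime_of_mem_primeFactors hp).two_le
    _ ≤ m := Nat.le_of_dvd (Nat.pos_of_ne_zero hm) (Nat.prod_primeFactors_dvd m)

lemma natAbs_mul_le_of_mem {s : ℤ} {M Q : ℕ} (h : s ∈ nzIcc (M / Q)) : (s * Q).natAbs ≤ M := by
  simp only [nzIcc, Finset.mem_erase, Finset.mem_Icc] at h
  rw [Int.natAbs_mul, Int.natAbs_natCast]
  exact (Nat.mul_le_mul_right Q (show s.natAbs ≤ M / Q by omega)).trans (Nat.div_mul_le_self M Q)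

lemma nthr_le (k : ℕ) : (nthr k : ℝ) ≤ thr k := Nat.floor_le (thr_pos k).le

lemma nthr_mul_nthr_le {k₁ k₂ : ℕ} (h : k₂ ≤ k₁) : nthr k₁ * nthr k₂ ≤ 2 ^ (k₁ ^ 2) := by
  have h1 : (nthr k₁ : ℝ) * nthr k₂ ≤ thr k₁ * thr k₂ :=
    mul_le_mul (nthr_le _) (nthr_le _) (Nat.cast_nonneg _) (thr_pos _).le
  have h2 : thr k₁ * thr k₂ ≤ (2 : ℝ) ^ (k₁ ^ 2) := by
    unfold thr
    rw [← Real.rpow_add (by norm_num), ← Real.rpow_natCast 2 (k₁ ^ 2)]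
    refine Real.rpow_le_rpow_of_exponent_le (by norm_num) ?_
    have c1 := cexp_lt
    have c2 := cexp_gt
    have h' : (k₂ : ℝ) ≤ k₁ := by exact_mod_cast h
    have h0 : (0 : ℝ) ≤ k₂ := Nat.cast_nonneg _
    have hsq : (k₂ : ℝ) ^ 2 ≤ k₁ ^ 2 := by gcongr
    push_cast
    nlinarith [sq_nonneg (k₁ : ℝ)]
  exact_mod_cast h1.trans h2

/-- The source of the exponent `c = √2 - 1`, with `x = k₁`, `y = k₂` and all quantities replaced by
their binary logarithms: if `bad₂ k₁ k₂` is not empty, then `modProd k₂ ≤ thr k₁ * thr k₂`, and this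
bounds `(thr k₁ * thr k₂) ^ 2 / modProd k₁` by `thr k₁ / 2 ^ k₁`. -/
lemma exponent_bound {c x y : ℝ} (hc : c ^ 2 = 1 - 2 * c) (hc0 : 0 < c) (c1 : c < 1)
    (hx : 0 ≤ x) (hy : 0 ≤ y)
    (h : y ^ 2 + y ≤ (c * x ^ 2 - x) + (c * y ^ 2 - y)) :
    2 * ((c * x ^ 2 - x) + (c * y ^ 2 - y)) - (x ^ 2 + x) ≤ c * x ^ 2 - 2 * x := by
  have h1 : (1 - c) * y ^ 2 ≤ c * x ^ 2 := by nlinarith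
  have h2 : (1 - c) * (2 * c * y ^ 2) ≤ (1 - c) * ((1 - c) * x ^ 2) := by
    have : 2 * c * ((1 - c) * y ^ 2) ≤ 2 * c * (c * x ^ 2) := by gcongr
    have e : (1 - c) * ((1 - c) * x ^ 2) = 2 * c * (c * x ^ 2) := by
      linear_combination (- x ^ 2) * hc
    rw [e]; linarith
  have h3 := le_of_mul_le_mul_left h2 (by linarith)
  nlinarith

/-- The number of pairs in the definition of `bad₂` is at most
`4 * (thr k₁ * thr k₂) ^ 2 / modProd k₁`, and each of them contributes at most `1 + k₁ ^ 2` primes. -/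
lemma card_bad₂_le {k₁ k₂ : ℕ} (h : k₂ ≤ k₁) :
    ((bad₂ k₁ k₂).card : ℝ) ≤
      4 * (1 + (k₁ : ℝ) ^ 2) * (2 : ℝ) ^ (cexp * (k₁ : ℝ) ^ 2 - 2 * k₁) := by
  set U := nthr k₁ * nthr k₂ / modProd k₂ with hU
  set V := nthr k₁ * nthr k₂ / modProdIco k₂ k₁ with hV
  have hcard : (bad₂ k₁ k₂).card ≤ (2 * U) * (2 * V) * (1 + k₁ ^ 2) := by
    have := Finset.card_biUnion_le_card_mul (nzIcc U ×ˢ nzIcc V)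
      (fun z => (z.1 * modProd k₂ - z.2 * modProdIco k₂ k₁ : ℤ).natAbs.primeFactors)
      (1 + k₁ ^ 2) ?_
    · rwa [Finset.card_product, card_nzIcc, card_nzIcc] at this
    · rintro ⟨s, t⟩ hz
      rw [Finset.mem_product] at hz
      have h1 := natAbs_mul_le_of_mem hz.1
      have h2 := natAbs_mul_le_of_mem hz.2
      dsimp only at h1 h2 ⊢
      have h3 := nthr_mul_nthr_le h
      generalize (s * modProd k₂ : ℤ) = x at *
      generalize (t * modProdIco k₂ k₁ : ℤ) = y at *
      by_cases h0 : (x - y).natAbs = 0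
      · rw [h0]; simp
      · have h4 := two_pow_card_primeFactors_le _ h0
        have h5 : (x - y).natAbs ≤ 2 ^ (1 + k₁ ^ 2) := by rw [pow_add]; omega
        exact (Nat.pow_le_pow_iff_right (by norm_num)).mp (h4.trans h5)
  have hcardR : ((bad₂ k₁ k₂).card : ℝ) ≤ (2 * U) * (2 * V) * (1 + (k₁ : ℝ) ^ 2) := by
    exact_mod_cast hcard
  have hpow : (0 : ℝ) < (2 : ℝ) ^ (cexp * (k₁ : ℝ) ^ 2 - 2 * k₁) := by positivity
  suffices hUV : (U : ℝ) * V ≤ (2 : ℝ) ^ (cexp * (k₁ : ℝ) ^ 2 - 2 * k₁) by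
    calc _ ≤ _ := hcardR
      _ = 4 * (1 + (k₁ : ℝ) ^ 2) * (U * V) := by ring
      _ ≤ _ := by gcongr
  by_cases hQ : nthr k₁ * nthr k₂ < modProd k₂
  · rw [hU, Nat.div_eq_of_lt hQ]; simpa using hpow.le
  · push Not at hQ
    have hM : ((nthr k₁ * nthr k₂ : ℕ) : ℝ) ≤ thr k₁ * thr k₂ := by
      push_cast
      exact mul_le_mul (nthr_le _) (nthr_le _) (Nat.cast_nonneg _) (thr_pos _).le
    have hE : thr k₁ * thr k₂
        = (2 : ℝ) ^ ((cexp * (k₁ : ℝ) ^ 2 - k₁) + (cexp * (k₂ : ℝ) ^ 2 - k₂)) := by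
      unfold thr; rw [← Real.rpow_add (by norm_num)]
    have hq (k : ℕ) : (2 : ℝ) ^ ((k : ℝ) ^ 2 + k) ≤ modProd k := by
      have := le_modProd k
      have : ((2 ^ (k ^ 2 + k) : ℕ) : ℝ) ≤ modProd k := by exact_mod_cast this
      refine le_trans (le_of_eq ?_) this
      push_cast
      rw [← Real.rpow_natCast 2 (k ^ 2 + k)]; push_cast; rfl
    have hexp : (k₂ : ℝ) ^ 2 + k₂ ≤ (cexp * (k₁ : ℝ) ^ 2 - k₁) + (cexp * (k₂ : ℝ) ^ 2 - k₂) := by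
      rw [← Real.rpow_le_rpow_left_iff (x := 2) (by norm_num), ← hE]
      exact (hq k₂).trans ((by exact_mod_cast hQ : (modProd k₂ : ℝ) ≤ _).trans hM)
    have hb := exponent_bound cexp_sq (by linarith [cexp_gt]) (by linarith [cexp_lt])
      (Nat.cast_nonneg k₁) (Nat.cast_nonneg k₂) hexp
    have hQ0 : (0 : ℝ) < modProd k₂ := by exact_mod_cast modProd_pos _
    have hR0 : (0 : ℝ) < modProdIco k₂ k₁ := by exact_mod_cast modProdIco_pos _ _
    have hQR : (modProd k₂ : ℝ) * modProdIco k₂ k₁ = modProd k₁ := by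
      exact_mod_cast modProd_mul _ _ h
    have hTT : 0 < thr k₁ * thr k₂ := mul_pos (thr_pos _) (thr_pos _)
    calc (U : ℝ) * V ≤ (thr k₁ * thr k₂ / modProd k₂) * (thr k₁ * thr k₂ / modProdIco k₂ k₁) := by
          have hU' : (U : ℝ) ≤ thr k₁ * thr k₂ / modProd k₂ :=
            Nat.cast_div_le.trans (by gcongr)
          have hV' : (V : ℝ) ≤ thr k₁ * thr k₂ / modProdIco k₂ k₁ :=
            Nat.cast_div_le.trans (by gcongr)
          gcongr
      _ = (thr k₁ * thr k₂) ^ 2 / modProd k₁ := by rw [← hQR]; field_simp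
      _ ≤ (thr k₁ * thr k₂) ^ 2 / (2 : ℝ) ^ ((k₁ : ℝ) ^ 2 + k₁) := by
          gcongr
          exact hq k₁
      _ = (2 : ℝ) ^ (2 * ((cexp * (k₁ : ℝ) ^ 2 - k₁) + (cexp * (k₂ : ℝ) ^ 2 - k₂))
            - ((k₁ : ℝ) ^ 2 + k₁)) := by
          rw [hE, sq, ← Real.rpow_add two_pos, ← two_mul, ← Real.rpow_sub two_pos]
      _ ≤ _ := Real.rpow_le_rpow_of_exponent_le (by norm_num) hb

lemma card_bad_le (i k : ℕ) (hk : 5 ≤ k) (hik : i ≤ k) : ((bad i).card : ℝ) ≤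
    (k + 1) * (4 * (1 + (k : ℝ) ^ 2) * (2 : ℝ) ^ (cexp * (k : ℝ) ^ 2 - 2 * k)) := by
  have hik' : (i : ℝ) ≤ k := by exact_mod_cast hik
  have hk' : (5 : ℝ) ≤ k := by exact_mod_cast hk
  have hmono : (2 : ℝ) ^ (cexp * (i : ℝ) ^ 2 - 2 * i) ≤ (2 : ℝ) ^ (cexp * (k : ℝ) ^ 2 - 2 * k) := by
    refine Real.rpow_le_rpow_of_exponent_le (by norm_num) ?_
    have h0 : (0 : ℝ) ≤ i := Nat.cast_nonneg _
    have : 2 ≤ cexp * (k + i) := by nlinarith [cexp_gt]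
    nlinarith [mul_nonneg (sub_nonneg.mpr hik') (sub_nonneg.mpr this)]
  calc ((bad i).card : ℝ) ≤ ∑ j ∈ Finset.range (i + 1), ((bad₂ i j).card : ℝ) := by
        exact_mod_cast Finset.card_biUnion_le
    _ ≤ ∑ j ∈ Finset.range (i + 1),
          (4 * (1 + (k : ℝ) ^ 2) * (2 : ℝ) ^ (cexp * (k : ℝ) ^ 2 - 2 * k)) := by
        refine Finset.sum_le_sum fun j hj => ?_
        refine (card_bad₂_le (Nat.lt_succ_iff.mp (Finset.mem_range.mp hj))).trans ?_
        gcongr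
    _ = (i + 1) * (4 * (1 + (k : ℝ) ^ 2) * (2 : ℝ) ^ (cexp * (k : ℝ) ^ 2 - 2 * k)) := by
        simp
    _ ≤ _ := by gcongr

/-! ### Counting the good primes -/

lemma eventually_primeCounting_ge :
    ∀ᶠ x : ℝ in atTop, x / (4 * Real.log x) ≤ Nat.primeCounting ⌊x⌋₊ := by
  have h1 : ∀ᶠ x : ℝ in atTop, ‖Real.log x‖ ≤ (1 / 8) * ‖x‖ :=
    Real.isLittleO_log_id_atTop.bound (by norm_num)
  filter_upwards [h1, eventually_ge_atTop 16] with x hx hx16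
  have hlog : 0 < Real.log x := Real.log_pos (by linarith)
  rw [Real.norm_of_nonneg hlog.le, Real.norm_of_nonneg (by linarith)] at hx
  refine le_trans ?_ (Chebyshev.pi_ge' (by linarith))
  have h2 : Real.log (x + 2) ≤ Real.log x + Real.log 2 := by
    rw [← Real.log_mul (by linarith) (by norm_num)]
    exact Real.log_le_log (by linarith) (by linarith)
  have l1 := Real.log_two_gt_d9
  have l2 := Real.log_two_lt_d9
  have h3 : x / 4 ≤ (x - 1) * Real.log 2 - Real.log (x + 2) := by nlinarith
  calc x / (4 * Real.log x) = (x / 4) / Real.log x := by field_simp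
    _ ≤ _ := by gcongr

lemma tendsto_thr : Tendsto (fun k => thr k) atTop atTop := by
  refine tendsto_atTop_mono' _ ?_ (tendsto_pow_atTop_atTop_of_one_lt (r := (2 : ℝ)) (by norm_num))
  filter_upwards [eventually_ge_atTop 5] with k hk
  exact two_pow_le_thr k hk

/-- The good primes up to `thr k`. -/
noncomputable def goodUpTo (k : ℕ) : Finset ℕ := by
  classical exact (Finset.range (nthr k + 1)).filter Good_s1

lemma mem_goodUpTo {k p : ℕ} : p ∈ goodUpTo k ↔ p ≤ nthr k ∧ Good_s1 p := by
  simp [goodUpTo]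

/-- Most of the primes up to `thr k` are good: by `card_bad_le` those that are discarded, together
with the moduli, are too few to matter. -/
lemma eventually_card_goodUpTo :
    ∀ᶠ k : ℕ in atTop, (2 : ℝ) ^ (cexp * (k : ℝ) ^ 2 - 2 * k) ≤ (goodUpTo k).card := by
  classical
  have hpoly : ∀ᶠ k : ℕ in atTop, (264 : ℝ) * (k : ℝ) ^ 6 ≤ 2 ^ k := by
    have := (tendsto_pow_const_div_const_pow_of_one_lt 6 (show (1 : ℝ) < 2 by norm_num)).eventually
      (gt_mem_nhds (show (0 : ℝ) < 1 / 264 by norm_num))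
    filter_upwards [this] with k hk
    rw [div_lt_iff₀ (by positivity)] at hk
    linarith
  filter_upwards [tendsto_thr.eventually eventually_primeCounting_ge, hpoly,
    eventually_ge_atTop 5] with k h1 h2 hk
  have hk' : (5 : ℝ) ≤ k := by exact_mod_cast hk
  have hsub : Nat.primesLE (nthr k) ⊆ goodUpTo k ∪ ((Finset.range k).image modulus ∪
      (Finset.range (k + 1)).biUnion bad) := by
    intro p hp
    rw [Nat.mem_primesLE] at hp
    have hlev : level p ≤ k := level_le ((Nat.cast_le.mpr hp.1).trans (nthr_le k))
    simp only [Finset.mem_union, mem_goodUpTo]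
    by_cases hA : Admissible p
    · by_cases hB : p ∈ bad (level p)
      · exact Or.inr (Or.inr (Finset.mem_biUnion.mpr ⟨_, Finset.mem_range.mpr (by omega), hB⟩))
      · exact Or.inl ⟨hp.1, hp.2, hA, hB⟩
    · simp only [Admissible, not_forall, not_not] at hA
      obtain ⟨j, hj, hd⟩ := hA
      refine Or.inr (Or.inl (Finset.mem_image.mpr ⟨j, Finset.mem_range.mpr (by omega), ?_⟩))
      exact (Nat.prime_dvd_prime_iff_eq (modulus_prime j) hp.2).mp hd
  have hcard : (Nat.primeCounting (nthr k) : ℝ) ≤ (goodUpTo k).card + (k +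
      (k + 1) * ((k + 1) * (4 * (1 + (k : ℝ) ^ 2) * (2 : ℝ) ^ (cexp * (k : ℝ) ^ 2 - 2 * k)))) := by
    rw [← Nat.primesLE_card_eq_primeCounting]
    have c1 := (Finset.card_le_card hsub).trans (Finset.card_union_le _ _)
    have c2 := Finset.card_union_le ((Finset.range k).image modulus)
      ((Finset.range (k + 1)).biUnion bad)
    have c3 : ((Finset.range k).image modulus).card ≤ k := by
      simpa using Finset.card_image_le (s := Finset.range k) (f := modulus)
    have c4 : (((Finset.range (k + 1)).biUnion bad).card : ℝ) ≤
        (k + 1) * ((k + 1) * (4 * (1 + (k : ℝ) ^ 2) *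
          (2 : ℝ) ^ (cexp * (k : ℝ) ^ 2 - 2 * k))) := by
      calc _ ≤ ∑ i ∈ Finset.range (k + 1), ((bad i).card : ℝ) := by
            exact_mod_cast Finset.card_biUnion_le
        _ ≤ ∑ i ∈ Finset.range (k + 1), ((k + 1) * (4 * (1 + (k : ℝ) ^ 2) *
          (2 : ℝ) ^ (cexp * (k : ℝ) ^ 2 - 2 * k))) :=
            Finset.sum_le_sum fun i hi =>
              card_bad_le i k hk (Nat.lt_succ_iff.mp (Finset.mem_range.mp hi))
        _ = _ := by simp
    have c5 : ((Nat.primesLE (nthr k)).card : ℝ) ≤ (goodUpTo k).card + (k +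
        ((Finset.range (k + 1)).biUnion bad).card) := by
      exact_mod_cast (by omega)
    linarith
  set P := (2 : ℝ) ^ (cexp * (k : ℝ) ^ 2 - 2 * k) with hP
  have hthr : thr k = P * 2 ^ k := by
    rw [hP, ← Real.rpow_natCast 2 k, ← Real.rpow_add (by norm_num)]
    unfold thr; ring_nf
  have hP1 : 1 ≤ P := by
    have := two_pow_le_thr k hk
    rw [hthr] at this
    exact le_of_mul_le_mul_right (by linarith) (show (0 : ℝ) < 2 ^ k by positivity)
  have hlog : Real.log (thr k) ≤ (k : ℝ) ^ 2 := by
    unfold thr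
    rw [Real.log_rpow (by norm_num)]
    have l1 := Real.log_two_gt_d9
    have l2 := Real.log_two_lt_d9
    have h6 : cexp * (k : ℝ) ^ 2 - k ≤ (k : ℝ) ^ 2 := by nlinarith [cexp_lt, sq_nonneg (k : ℝ)]
    calc _ ≤ (k : ℝ) ^ 2 * Real.log 2 := by gcongr
      _ ≤ _ := by nlinarith [sq_nonneg (k : ℝ)]
  have hlog0 : 0 < Real.log (thr k) := by
    refine Real.log_pos (lt_of_lt_of_le ?_ (two_pow_le_thr k hk))
    exact one_lt_pow₀ (by norm_num) (by omega)
  have h3 : thr k / (4 * (k : ℝ) ^ 2) ≤ Nat.primeCounting (nthr k) := by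
    refine le_trans ?_ h1
    have := (thr_pos k).le
    gcongr
  have h4 : P * (66 * (k : ℝ) ^ 4) ≤ thr k / (4 * (k : ℝ) ^ 2) := by
    rw [le_div_iff₀ (by positivity), hthr]
    calc P * (66 * (k : ℝ) ^ 4) * (4 * (k : ℝ) ^ 2) = P * (264 * (k : ℝ) ^ 6) := by ring
      _ ≤ _ := by gcongr
  have h5 : (k : ℝ) + (k + 1) * ((k + 1) * (4 * (1 + (k : ℝ) ^ 2) * P)) + P
      ≤ P * (66 * (k : ℝ) ^ 4) := by
    have e1 : (k : ℝ) ≤ P * k := by nlinarith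
    have e2 : (k : ℝ) + (k + 1) * ((k + 1) * (4 * (1 + (k : ℝ) ^ 2))) + 1 ≤ 66 * (k : ℝ) ^ 4 := by
      have hk1 : (1 : ℝ) ≤ k := by linarith
      have k2 : (k : ℝ) ≤ k ^ 4 := le_self_pow₀ hk1 (by norm_num)
      have k3 : (k : ℝ) ^ 2 ≤ k ^ 4 := pow_le_pow_right₀ hk1 (by norm_num)
      have k4 : (k : ℝ) ^ 3 ≤ k ^ 4 := pow_le_pow_right₀ hk1 (by norm_num)
      have k5 : (1 : ℝ) ≤ (k : ℝ) ^ 4 := one_le_pow₀ hk1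
      ring_nf
      linarith
    have e3 := mul_le_mul_of_nonneg_left e2 (by linarith : 0 ≤ P)
    linarith
  linarith

/-! ### The infinite Sidon set -/

lemma tendsto_index : Tendsto (fun x : ℝ => ⌊Real.sqrt (Real.logb 2 x + 4)⌋₊ - 2) atTop atTop := by
  refine (tendsto_sub_atTop_nat 2).comp (tendsto_nat_floor_atTop.comp
    (Real.tendsto_sqrt_atTop.comp (tendsto_atTop_add_const_right _ _ ?_)))
  exact Real.tendsto_logb_atTop (by norm_num)

/-- There is an infinite Sidon set with counting function at least `x ^ (√2 - 1 - δ)` for large `x`,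
namely the set of codes of good primes. -/
theorem exists_sidon : ∃ B : Set ℕ,
    (∀ a ∈ B, ∀ b ∈ B, ∀ c ∈ B, ∀ d ∈ B, a + b = c + d → (a = c ∧ b = d) ∨ (a = d ∧ b = c)) ∧
    ∀ δ : ℝ, 0 < δ → δ < Real.sqrt 2 - 1 → ∀ᶠ x : ℝ in atTop,
      x ^ (Real.sqrt 2 - 1 - δ) ≤ ({b | b ∈ B ∧ (b : ℝ) ≤ x}.ncard : ℝ) := by
  refine ⟨code '' {p | Good_s1 p}, ?_, fun δ hδ hδ' => ?_⟩
  · rintro _ ⟨a, ha, rfl⟩ _ ⟨b, hb, rfl⟩ _ ⟨c, hc, rfl⟩ _ ⟨d, hd, rfl⟩ h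
    rcases code_sidon ha hb hc hd h with ⟨rfl, rfl⟩ | ⟨rfl, rfl⟩
    · exact Or.inl ⟨rfl, rfl⟩
    · exact Or.inr ⟨rfl, rfl⟩
  change ∀ᶠ x : ℝ in atTop, x ^ (cexp - δ) ≤ _
  replace hδ' : 0 < cexp - δ := by unfold cexp; linarith
  have hk : ∀ᶠ k : ℕ in atTop,
      (cexp - δ) * ((k : ℝ) ^ 2 + 6 * k + 5) ≤ cexp * (k : ℝ) ^ 2 - 2 * k := by
    filter_upwards [eventually_ge_atTop ⌈10 / δ⌉₊, eventually_ge_atTop 1] with k hk hk1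
    have h1 : 10 / δ ≤ k := Nat.ceil_le.mp hk
    rw [div_le_iff₀ hδ] at h1
    have h2 : (1 : ℝ) ≤ k := by exact_mod_cast hk1
    have h3 : 10 * (k : ℝ) ≤ δ * k ^ 2 := by nlinarith
    have := cexp_lt
    nlinarith
  filter_upwards [tendsto_index.eventually (hk.and eventually_card_goodUpTo),
    tendsto_index.eventually (eventually_ge_atTop 1), eventually_ge_atTop 1] with x hx hx0 hx1
  -- the largest `k` with `2 ^ (k ^ 2 + 4 * k) ≤ x`, which bounds the codes of level at most `k`
  set k := ⌊Real.sqrt (Real.logb 2 x + 4)⌋₊ - 2 with hkdef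
  have hlog : 0 ≤ Real.logb 2 x := Real.logb_nonneg (by norm_num) hx1
  have hfl : ⌊Real.sqrt (Real.logb 2 x + 4)⌋₊ = k + 2 := by omega
  have hlow : (k : ℝ) ^ 2 + 4 * k ≤ Real.logb 2 x := by
    have : ((k + 2 : ℕ) : ℝ) ≤ Real.sqrt (Real.logb 2 x + 4) :=
      hfl ▸ Nat.floor_le (Real.sqrt_nonneg _)
    rw [Real.le_sqrt' (by positivity)] at this
    push_cast at this
    nlinarith
  have hupp : Real.logb 2 x ≤ (k : ℝ) ^ 2 + 6 * k + 5 := by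
    have := (Nat.lt_floor_add_one (Real.sqrt (Real.logb 2 x + 4))).le
    rw [hfl, Real.sqrt_le_left (by positivity)] at this
    push_cast at this
    nlinarith
  have hx' : x = (2 : ℝ) ^ Real.logb 2 x :=
    (Real.rpow_logb (by norm_num) (by norm_num) (by linarith)).symm
  have hcount : (goodUpTo k).card ≤ {b | b ∈ code '' {p | Good_s1 p} ∧ (b : ℝ) ≤ x}.ncard := by
    have hinj : Set.InjOn code (goodUpTo k : Set ℕ) := by
      intro a ha b hb hab
      have ha' := (mem_goodUpTo.mp ha).2
      have hb' := (mem_goodUpTo.mp hb).2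
      rcases code_sidon ha' ha' hb' hb' (by rw [hab]) with h | h <;> exact h.1
    rw [← Finset.card_image_of_injOn hinj, ← Set.ncard_coe_finset]
    refine Set.ncard_le_ncard ?_ ?_
    · intro b hb
      simp only [Finset.coe_image, Set.mem_image, Finset.mem_coe] at hb
      obtain ⟨p, hp, rfl⟩ := hb
      obtain ⟨hp1, hp2⟩ := mem_goodUpTo.mp hp
      refine ⟨⟨p, hp2, rfl⟩, ?_⟩
      have hlev : level p ≤ k := level_le ((Nat.cast_le.mpr hp1).trans (nthr_le k))
      have h1 : (code p : ℝ) ≤ ((2 ^ (k ^ 2 + 4 * k) : ℕ) : ℝ) :=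
        Nat.cast_le.mpr (code_lt p k hlev).le
      refine h1.trans ?_
      rw [hx']
      push_cast
      rw [← Real.rpow_natCast 2 (k ^ 2 + 4 * k)]
      refine Real.rpow_le_rpow_of_exponent_le (by norm_num) ?_
      push_cast
      exact hlow
    · refine (Set.finite_le_nat ⌊x⌋₊).subset fun b hb => ?_
      exact Nat.le_floor hb.2
  calc x ^ (cexp - δ) = (2 : ℝ) ^ (Real.logb 2 x * (cexp - δ)) := by
        conv_lhs => rw [hx']
        rw [← Real.rpow_mul (by norm_num)]
    _ ≤ (2 : ℝ) ^ (cexp * (k : ℝ) ^ 2 - 2 * k) := by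
        refine Real.rpow_le_rpow_of_exponent_le (by norm_num) (le_trans ?_ hx.1)
        rw [mul_comm]
        gcongr
    _ ≤ (goodUpTo k).card := hx.2
    _ ≤ _ := by exact_mod_cast hcount

/-! ### Representations by two summands -/

/-- The smaller summands of the representations of `n` as a sum of two elements of `A`. -/
def reps (A : Set ℤ) (n : ℤ) : Set ℤ := {a | a ∈ A ∧ n - a ∈ A ∧ a ≤ n - a}

lemma repFn_two (A : Set ℤ) (n : ℤ) : repFn A 2 n = (reps A n).encard := by
  unfold repFn
  have hinj : Set.InjOn (fun a : Fin 2 → ℤ => a 0)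
      {a : Fin 2 → ℤ | Monotone a ∧ (∀ i, a i ∈ A) ∧ ∑ i, a i = n} := by
    rintro a ⟨-, -, ha⟩ b ⟨-, -, hb⟩ hab
    rw [Fin.sum_univ_two] at ha hb
    simp only at hab
    ext i
    fin_cases i
    · exact hab
    · simp only [Fin.mk_one]; omega
  rw [← hinj.encard_image]
  congr 1
  ext x
  constructor
  · rintro ⟨a, ⟨hm, hA, hs⟩, rfl⟩
    rw [Fin.sum_univ_two] at hs
    have e : n - a 0 = a 1 := by omega
    exact ⟨hA 0, by rw [e]; exact hA 1, by rw [e]; exact hm (by decide)⟩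
  · rintro ⟨h1, h2, h3⟩
    refine ⟨![x, n - x], ⟨?_, ?_, ?_⟩, rfl⟩
    · intro i j hij
      fin_cases i <;> fin_cases j <;> simp_all
    · intro i
      fin_cases i
      · exact h1
      · exact h2
    · simp [Fin.sum_univ_two]

lemma reps_mono {A A' : Set ℤ} (h : A ⊆ A') (n : ℤ) : reps A n ⊆ reps A' n :=
  fun _ ha => ⟨h ha.1, h ha.2.1, ha.2.2⟩

/-- The elements of `D` that could create an unwanted coincidence between a sum of two elements of
`D ∪ S` involving them and another such sum, or a sum in `F`. -/
def badSet (D S F : Set ℤ) : Set ℤ :=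
  {d | d ∈ D ∧ ((∃ a ∈ D, ∃ s ∈ S, ∃ s' ∈ S, d + a = s + s') ∨
    (∃ a ∈ D, a ≠ d ∧ ∃ s ∈ S, ∃ s' ∈ S, d - a = s - s') ∨
    (∃ s ∈ S, ∃ s' ∈ S, ∃ s'' ∈ S, d = s + s' - s'') ∨ (∃ s ∈ S, d + s ∈ F))}

lemma badSet_mono {D S S' F : Set ℤ} (h : S ⊆ S') : badSet D S F ⊆ badSet D S' F := by
  rintro d ⟨hd, h'⟩
  refine ⟨hd, ?_⟩
  rcases h' with ⟨a, ha, s, hs, s', hs', e⟩ | ⟨a, ha, hne, s, hs, s', hs', e⟩ |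
    ⟨s, hs, s', hs', s'', hs'', e⟩ | ⟨s, hs, e⟩
  · exact Or.inl ⟨a, ha, s, h hs, s', h hs', e⟩
  · exact Or.inr (Or.inl ⟨a, ha, hne, s, h hs, s', h hs', e⟩)
  · exact Or.inr (Or.inr (Or.inl ⟨s, h hs, s', h hs', s'', h hs'', e⟩))
  · exact Or.inr (Or.inr (Or.inr ⟨s, h hs, e⟩))

/-- The Sidon property: sums of two elements determine the summands. -/
def IsSidonSet (D : Set ℤ) : Prop :=
  ∀ a ∈ D, ∀ b ∈ D, ∀ c ∈ D, ∀ d ∈ D, a + b = c + d → (a = c ∧ b = d) ∨ (a = d ∧ b = c)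

/-- By the Sidon property, an integer is a sum of at most one unordered pair of elements of `D`, and
a nonzero integer is a difference of at most one pair. -/
lemma ncard_badSet_le {D : Set ℤ} (hD : IsSidonSet D) (S F : Finset ℤ) :
    (badSet D S F).Finite ∧
      (badSet D S F).ncard ≤ (F.card + 4) * (S.card + 1) ^ 3 := by
  classical
  -- the elements of `D` occurring in a sum equal to `m`, resp. as minuend of a difference `m ≠ 0`
  have T1 : ∀ m : ℤ, ∃ T : Finset ℤ, T.card ≤ 2 ∧ ∀ d ∈ D, ∀ a ∈ D, d + a = m → d ∈ T := by
    intro m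
    by_cases h : ∃ d ∈ D, ∃ a ∈ D, d + a = m
    · obtain ⟨d, hd, a, ha, h⟩ := h
      refine ⟨{d, a}, Finset.card_le_two, fun d' hd' a' ha' h' => ?_⟩
      rcases hD d' hd' a' ha' d hd a ha (by omega) with h | h <;> simp [h.1]
    · push Not at h
      exact ⟨∅, by simp, fun d hd a ha e => absurd e (h d hd a ha)⟩
  have T2 : ∀ m : ℤ, ∃ T : Finset ℤ, T.card ≤ 1 ∧ ∀ d ∈ D, ∀ a ∈ D, a ≠ d → d - a = m → d ∈ T := by
    intro m
    by_cases h : ∃ d ∈ D, ∃ a ∈ D, a ≠ d ∧ d - a = m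
    · obtain ⟨d, hd, a, ha, -, h⟩ := h
      refine ⟨{d}, by simp, fun d' hd' a' ha' hne h' => ?_⟩
      rcases hD d' hd' a ha d hd a' ha' (by omega) with h | h
      · simp [h.1]
      · exact absurd h.1.symm hne
    · push Not at h
      exact ⟨∅, by simp, fun d hd a ha hne e => absurd e (h d hd a ha hne)⟩
  choose t1 ht1 ht1' using T1
  choose t2 ht2 ht2' using T2
  have hsub : badSet D S F ⊆ (((S ×ˢ S).biUnion (fun z => t1 (z.1 + z.2)) ∪
      (S ×ˢ S).biUnion (fun z => t2 (z.1 - z.2))) ∪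
      ((S ×ˢ S ×ˢ S).image (fun z => z.1 + z.2.1 - z.2.2) ∪
      (F ×ˢ S).image (fun z => z.1 - z.2)) : Finset ℤ) := by
    rintro d ⟨hd, h'⟩
    rw [Finset.mem_coe, Finset.mem_union, Finset.mem_union, Finset.mem_union]
    rcases h' with ⟨a, ha, s, hs, s', hs', e⟩ | ⟨a, ha, hne, s, hs, s', hs', e⟩ |
      ⟨s, hs, s', hs', s'', hs'', e⟩ | ⟨s, hs, e⟩
    · exact Or.inl (Or.inl (Finset.mem_biUnion.mpr
        ⟨(s, s'), Finset.mem_product.mpr ⟨hs, hs'⟩, ht1' _ d hd a ha e⟩))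
    · exact Or.inl (Or.inr (Finset.mem_biUnion.mpr
        ⟨(s, s'), Finset.mem_product.mpr ⟨hs, hs'⟩, ht2' _ d hd a ha hne e⟩))
    · exact Or.inr (Or.inl (Finset.mem_image.mpr ⟨(s, s', s''), Finset.mem_product.mpr
        ⟨hs, Finset.mem_product.mpr ⟨hs', hs''⟩⟩, e.symm⟩))
    · exact Or.inr (Or.inr (Finset.mem_image.mpr
        ⟨(d + s, s), Finset.mem_product.mpr ⟨e, hs⟩, by simp⟩))
  refine ⟨(Finset.finite_toSet _).subset hsub, ?_⟩
  refine (Set.ncard_le_ncard hsub (Finset.finite_toSet _)).trans ?_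
  rw [Set.ncard_coe_finset]
  refine (Finset.card_union_le _ _).trans ((Nat.add_le_add (Finset.card_union_le _ _)
    (Finset.card_union_le _ _)).trans ?_)
  have c1 := Finset.card_biUnion_le_card_mul (S ×ˢ S) (fun z => t1 (z.1 + z.2)) 2
    (fun z _ => ht1 _)
  have c2 := Finset.card_biUnion_le_card_mul (S ×ˢ S) (fun z => t2 (z.1 - z.2)) 1
    (fun z _ => ht2 _)
  have c3 := Finset.card_image_le (s := S ×ˢ S ×ˢ S) (f := fun z => z.1 + z.2.1 - z.2.2)
  have c4 := Finset.card_image_le (s := F ×ˢ S) (f := fun z => z.1 - z.2)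
  simp only [Finset.card_product] at c1 c2 c3 c4
  nlinarith [Nat.zero_le (F.card * S.card), Nat.zero_le (F.card * S.card ^ 2),
    Nat.zero_le (F.card * S.card ^ 3), Nat.zero_le S.card]

/-! ### Adding elements without exceeding the prescribed number of representations -/

/-- Adding an element of `D` which is not bad only creates sums which lie outside `F` and have a
single representation. A sum from `D + D` never equals one from `D + S`, because only the former is
divisible by `3`; all other coincidences are excluded by the Sidon property or by `badSet`. -/
lemma le_insert {D A : Set ℤ} {S F : Set ℤ} {f : ℤ → ℕ∞} (hf : ∀ n, n ∉ F → 1 ≤ f n)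
    (hD : IsSidonSet D) (hD3 : ∀ d ∈ D, (3 : ℤ) ∣ d) (hDF : ∀ a ∈ D, ∀ b ∈ D, a + b ∉ F)
    (hS3 : ∀ s ∈ S, ¬ (3 : ℤ) ∣ s) (hA : A ⊆ D ∪ S) (hr : ∀ n, (reps A n).encard ≤ f n)
    {d : ℤ} (hd : d ∈ D) (hbad : d ∉ badSet D S F) (n : ℤ) :
    (reps (insert d A) n).encard ≤ f n := by
  have hsub : insert d A ⊆ D ∪ S := Set.insert_subset (Or.inl hd) hA
  by_cases hn : n - d ∈ insert d A
  · obtain ⟨a, ha, rfl⟩ : ∃ a ∈ insert d A, n = d + a := ⟨n - d, hn, by omega⟩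
    have b1 : ∀ a ∈ D, ∀ s ∈ S, ∀ s' ∈ S, d + a ≠ s + s' := fun a ha s hs s' hs' e =>
      hbad ⟨hd, Or.inl ⟨a, ha, s, hs, s', hs', e⟩⟩
    have b2 : ∀ a ∈ D, a ≠ d → ∀ s ∈ S, ∀ s' ∈ S, d - a ≠ s - s' :=
      fun a ha hne s hs s' hs' e =>
        hbad ⟨hd, Or.inr (Or.inl ⟨a, ha, hne, s, hs, s', hs', e⟩)⟩
    have b3 : ∀ s ∈ S, ∀ s' ∈ S, ∀ s'' ∈ S, d ≠ s + s' - s'' := fun s hs s' hs' s'' hs'' e =>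
      hbad ⟨hd, Or.inr (Or.inr (Or.inl ⟨s, hs, s', hs', s'', hs'', e⟩))⟩
    have b4 : ∀ s ∈ S, d + s ∉ F := fun s hs e =>
      hbad ⟨hd, Or.inr (Or.inr (Or.inr ⟨s, hs, e⟩))⟩
    have hfn : 1 ≤ f (d + a) := by
      refine hf _ ?_
      rcases hsub ha with h | h
      · exact hDF d hd a h
      · exact b4 a h
    have mixed : ∀ x ∈ D, ∀ y ∈ S, d + a = x + y → (x = d ∧ y = a) := by
      intro x hx y hy e
      have d1 := hD3 d hd
      have d2 := hD3 x hx
      have d3 := hS3 y hy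
      rcases hsub ha with h | h
      · have := hD3 a h
        omega
      · by_cases hxd : x = d
        · exact ⟨hxd, by omega⟩
        · exact absurd (by omega) (b2 x hx hxd y hy a h)
    have key : ∀ x ∈ D ∪ S, ∀ y ∈ D ∪ S, d + a = x + y → (x = d ∧ y = a) ∨ (x = a ∧ y = d) := by
      intro x hx y hy e
      rcases hx with hx | hx <;> rcases hy with hy | hy
      · rcases hsub ha with h | h
        · rcases hD x hx y hy d hd a h e.symm with h | h <;> omega
        · have d1 := hD3 d hd
          have d2 := hD3 x hx
          have d3 := hD3 y hy
          have d4 := hS3 a h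
          omega
      · exact Or.inl (mixed x hx y hy e)
      · have := mixed y hy x hx (by omega)
        omega
      · rcases hsub ha with h | h
        · exact absurd e (b1 a h x hx y hy)
        · exact absurd (by omega) (b3 x hx y hy a h)
    refine le_trans ?_ hfn
    rw [Set.encard_le_one_iff]
    rintro x y ⟨hx1, hx2, hx3⟩ ⟨hy1, hy2, hy3⟩
    have k1 := key x (hsub hx1) _ (hsub hx2) (by omega)
    have k2 := key y (hsub hy1) _ (hsub hy2) (by omega)
    omega
  · refine le_trans (Set.encard_le_encard ?_) (hr n)
    rintro x ⟨hx1, hx2, hx3⟩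
    have hxd : x ≠ d := by rintro rfl; exact hn hx2
    have hxd' : n - x ≠ d := by
      intro h
      apply hn
      rwa [show n - d = x by omega]
    exact ⟨hx1.resolve_left hxd, hx2.resolve_left hxd', hx3⟩

lemma le_union {D A : Set ℤ} {S F : Set ℤ} {f : ℤ → ℕ∞} (hf : ∀ n, n ∉ F → 1 ≤ f n)
    (hD : IsSidonSet D) (hD3 : ∀ d ∈ D, (3 : ℤ) ∣ d) (hDF : ∀ a ∈ D, ∀ b ∈ D, a + b ∉ F)
    (hS3 : ∀ s ∈ S, ¬ (3 : ℤ) ∣ s) (hA : A ⊆ D ∪ S) (hr : ∀ n, (reps A n).encard ≤ f n)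
    (E : Finset ℤ) (hE : ∀ d ∈ E, d ∈ D ∧ d ∉ badSet D S F) (n : ℤ) :
    (reps (↑E ∪ A) n).encard ≤ f n := by
  classical
  induction E using Finset.induction_on generalizing n with
  | empty => simpa using hr n
  | insert d E _ ih =>
    rw [Finset.coe_insert, Set.insert_union]
    have hE' : ∀ x ∈ E, x ∈ D ∧ x ∉ badSet D S F := fun x hx => hE x (Finset.mem_insert_of_mem hx)
    have hd := hE d (Finset.mem_insert_self _ _)
    refine le_insert hf hD hD3 hDF hS3 ?_ (ih hE') hd.1 hd.2 n
    exact Set.union_subset (fun x hx => Or.inl (hE' x hx).1) hA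

/-- A representation of `n` can be created by adding two huge numbers with sum `n`. -/
lemma exists_pair {f : ℤ → ℕ∞} (F A : Finset ℤ) (hf : ∀ n, n ∉ F → 1 ≤ f n)
    (hr : ∀ n, (reps A n).encard ≤ f n) (n : ℤ) (hn : (reps A n).encard < f n) :
    ∃ s t : ℤ, ¬ (3 : ℤ) ∣ s ∧ ¬ (3 : ℤ) ∣ t ∧ (∀ m, (reps (insert s (insert t ↑A)) m).encard ≤ f m)
      ∧ (reps A n).encard + 1 ≤ (reps (insert s (insert t ↑A)) n).encard := by
  obtain ⟨L, hL⟩ : ∃ L : ℤ, |n| ≤ L ∧ (∀ a ∈ A, |a| ≤ L) ∧ ∀ a ∈ F, |a| ≤ L := by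
    refine ⟨|n| + ∑ a ∈ A, |a| + ∑ a ∈ F, |a|, ?_, fun a ha => ?_, fun a ha => ?_⟩
    all_goals
      have h1 : 0 ≤ ∑ a ∈ A, |a| := Finset.sum_nonneg fun _ _ => abs_nonneg _
      have h2 : 0 ≤ ∑ a ∈ F, |a| := Finset.sum_nonneg fun _ _ => abs_nonneg _
      have h3 := abs_nonneg n
    · linarith
    · have := Finset.single_le_sum (f := fun a : ℤ => |a|) (fun _ _ => abs_nonneg _) ha
      linarith
    · have := Finset.single_le_sum (f := fun a : ℤ => |a|) (fun _ _ => abs_nonneg _) ha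
      linarith
  obtain ⟨hLn, hLA, hLF⟩ := hL
  simp only [abs_le] at hLn hLA hLF
  obtain ⟨s, hs, hs3, ht3⟩ : ∃ s : ℤ, 10 * L + 10 ≤ s ∧ ¬ (3 : ℤ) ∣ s ∧ ¬ (3 : ℤ) ∣ n - s := by
    by_cases h : (3 : ℤ) ∣ n - 1
    · exact ⟨3 * (10 * L + 10) + 2, by omega, by omega, by omega⟩
    · exact ⟨3 * (10 * L + 10) + 1, by omega, by omega, by omega⟩
  have hsub : (A : Set ℤ) ⊆ insert s (insert (n - s) ↑A) :=
    (Set.subset_insert _ _).trans (Set.subset_insert _ _)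
  have cases : ∀ x ∈ insert s (insert (n - s) (A : Set ℤ)),
      x = s ∨ x = n - s ∨ (x ∈ A ∧ -L ≤ x ∧ x ≤ L) := by
    intro x hx
    rcases hx with h | h | h
    · exact Or.inl h
    · exact Or.inr (Or.inl h)
    · exact Or.inr (Or.inr ⟨h, hLA x h⟩)
  have htA : n - s ∉ reps A n := fun h => by
    have := hLA _ h.1
    omega
  refine ⟨s, n - s, hs3, ht3, fun m => ?_, ?_⟩
  · rcases eq_or_ne m n with rfl | hmn
    · have : reps (insert s (insert (m - s) ↑A)) m ⊆ insert (m - s) (reps A m) := by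
        rintro x ⟨h1, h2, h3⟩
        rcases cases x h1 with h | h | h
        · omega
        · exact Or.inl h
        · rcases cases _ h2 with h' | h' | h'
          · omega
          · omega
          · exact Or.inr ⟨h.1, h'.1, h3⟩
      refine (Set.encard_le_encard this).trans ?_
      rw [Set.encard_insert_of_notMem htA]
      exact Order.add_one_le_of_lt hn
    · by_cases hnew : reps (insert s (insert (n - s) ↑A)) m ⊆ reps A m
      · exact (Set.encard_le_encard hnew).trans (hr m)
      · rw [Set.not_subset] at hnew
        obtain ⟨x, ⟨hx1, hx2, hx3⟩, hx4⟩ := hnew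
        -- one of the summands `x`, `m - x` is new, so `m` is one of `2s`, `2t`, `s + a`, `t + a`
        have hx4' : ¬ (x ∈ A ∧ m - x ∈ A) := fun h => hx4 ⟨h.1, h.2, hx3⟩
        have cx1 := cases _ hx1
        have cx2 := cases _ hx2
        have hfm : 1 ≤ f m := by
          refine hf m fun hmF => ?_
          have := hLF m hmF
          rcases cx1 with h | h | h <;> rcases cx2 with h' | h' | h' <;> first | omega | tauto
        refine le_trans ?_ hfm
        rw [Set.encard_le_one_iff]
        have key : ∀ y ∈ reps (insert s (insert (n - s) ↑A)) m, y = x := by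
          rintro y ⟨hy1, hy2, hy3⟩
          have cy1 := cases _ hy1
          have cy2 := cases _ hy2
          rcases cx1 with h | h | h <;> rcases cx2 with h' | h' | h' <;>
            first | omega | exact absurd ⟨h.1, h'.1⟩ hx4'
        exact fun a b ha hb => (key a ha).trans (key b hb).symm
  · rw [← Set.encard_insert_of_notMem htA]
    refine Set.encard_le_encard (Set.insert_subset ?_ (reps_mono hsub n))
    refine ⟨Or.inr (Or.inl rfl), Or.inl (by omega), by omega⟩

/-! ### The inductive construction -/

/-- A stage of the construction: `p.1` is the finite part of the set built so far, consisting of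
elements of `D` and of the auxiliary elements `p.2`, which are not divisible by `3`; no integer
has more representations than prescribed by `f`. -/
def Stage (D : Set ℤ) (f : ℤ → ℕ∞) (p : Finset ℤ × Finset ℤ) : Prop :=
  (p.1 : Set ℤ) ⊆ D ∪ p.2 ∧ (∀ s ∈ p.2, ¬ (3 : ℤ) ∣ s) ∧ ∀ n, (reps p.1 n).encard ≤ f n

/-- Two stages, the second of which has one more representation of `n` (if needed) and contains the
elements of `D` up to `2 ^ j` which are not bad. -/
def StepRel (D : Set ℤ) (F : Finset ℤ) (f : ℤ → ℕ∞) (j : ℕ) (n : ℤ)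
    (p p' : Finset ℤ × Finset ℤ) : Prop :=
  p.1 ⊆ p'.1 ∧ p'.2.card ≤ p.2.card + 2 ∧
    (∀ d ∈ D, |d| ≤ 2 ^ j → d ∉ badSet D p'.2 F → d ∈ p'.1) ∧
    (f n ≤ (reps p.1 n).encard ∨ (reps p.1 n).encard + 1 ≤ (reps p'.1 n).encard)

lemma exists_step {D : Set ℤ} {F : Finset ℤ} {f : ℤ → ℕ∞} (hf : ∀ n, n ∉ F → 1 ≤ f n)
    (hD : IsSidonSet D) (hD3 : ∀ d ∈ D, (3 : ℤ) ∣ d) (hDF : ∀ a ∈ D, ∀ b ∈ D, a + b ∉ F)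
    (j : ℕ) (n : ℤ) (p : Finset ℤ × Finset ℤ) (hp : Stage D f p) :
    ∃ p', Stage D f p' ∧ StepRel D F f j n p p' := by
  classical
  obtain ⟨A, S⟩ := p
  obtain ⟨h1, h2, h3⟩ := hp
  dsimp only at h1 h2 h3
  obtain ⟨A₁, S₁, hA₁, hS₁, h1', h2', h3', h4⟩ : ∃ A₁ S₁ : Finset ℤ, A ⊆ A₁ ∧
      S₁.card ≤ S.card + 2 ∧ (A₁ : Set ℤ) ⊆ D ∪ S₁ ∧ (∀ s ∈ S₁, ¬ (3 : ℤ) ∣ s) ∧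
      (∀ n, (reps A₁ n).encard ≤ f n) ∧
      (f n ≤ (reps A n).encard ∨ (reps A n).encard + 1 ≤ (reps A₁ n).encard) := by
    by_cases hn : f n ≤ (reps A n).encard
    · exact ⟨A, S, subset_rfl, by omega, h1, h2, h3, Or.inl hn⟩
    · obtain ⟨s, t, hs, ht, hr, hr'⟩ := exists_pair F A hf h3 n (not_le.mp hn)
      refine ⟨insert s (insert t A), insert s (insert t S), ?_, ?_, ?_, ?_, ?_, Or.inr ?_⟩
      · exact (Finset.subset_insert _ _).trans (Finset.subset_insert _ _)
      · exact (Finset.card_insert_le _ _).trans (by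
          have := Finset.card_insert_le t S
          omega)
      · intro x hx
        simp only [Finset.coe_insert, Set.mem_insert_iff] at hx
        rcases hx with rfl | rfl | hx
        · exact Or.inr (by simp)
        · exact Or.inr (by simp)
        · rcases h1 hx with h | h
          · exact Or.inl h
          · refine Or.inr ?_
            simp only [Finset.coe_insert, Set.mem_insert_iff]
            exact Or.inr (Or.inr h)
      · intro x hx
        simp only [Finset.mem_insert] at hx
        rcases hx with rfl | rfl | hx
        · exact hs
        · exact ht
        · exact h2 x hx
      · simpa using hr
      · simpa using hr'
  set E : Finset ℤ := (Finset.Icc (-2 ^ j) (2 ^ j)).filter (fun d => d ∈ D ∧ d ∉ badSet D S₁ F)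
    with hE
  have hsub : (A₁ : Set ℤ) ⊆ ↑(E ∪ A₁) := by
    rw [Finset.coe_union]; exact Set.subset_union_right
  refine ⟨(E ∪ A₁, S₁), ⟨?_, h2', fun m => ?_⟩, ?_, hS₁, ?_, ?_⟩
  · rw [Finset.coe_union]
    refine Set.union_subset (fun x hx => Or.inl ?_) h1'
    exact (Finset.mem_filter.mp hx).2.1
  · rw [Finset.coe_union]
    exact le_union (F := F) hf hD hD3 hDF h2' h1' h3' E (fun d hd => (Finset.mem_filter.mp hd).2) m
  · exact hA₁.trans Finset.subset_union_right
  · intro d hd hdj hbad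
    exact Finset.mem_union_left _ (Finset.mem_filter.mpr
      ⟨Finset.mem_Icc.mpr (abs_le.mp hdj), hd, hbad⟩)
  · exact h4.imp id fun h => h.trans (Set.encard_le_encard (reps_mono hsub n))

/-- A sequence of integers taking every value infinitely often. -/
noncomputable def target (j : ℕ) : ℤ := (Denumerable.ofNat (ℤ × ℕ) j).1

/-- The requirement that `n` has enough representations is met at arbitrarily late stages. -/
lemma exists_target (n : ℤ) (k : ℕ) : ∃ j, k ≤ j ∧ target j = n := by
  have hinj : Function.Injective (fun m : ℕ => Encodable.encode (n, m)) := fun a b h =>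
    (Prod.mk.inj (Encodable.encode_injective h)).2
  obtain ⟨_, ⟨m, rfl⟩, hm⟩ := (Set.infinite_range_of_injective hinj).exists_gt k
  refine ⟨_, hm.le, ?_⟩
  change (Denumerable.ofNat (ℤ × ℕ) (Encodable.encode (n, m))).1 = n
  rw [Denumerable.ofNat_encode]

/-- A Sidon set `D` of multiples of `3` can be changed into a set with representation function `f`
by adding elements and removing only polylogarithmically many elements of `D`. -/
lemma exists_set {D : Set ℤ} {F : Finset ℤ} {f : ℤ → ℕ∞} (hf : ∀ n, n ∉ F → 1 ≤ f n)
    (hD : IsSidonSet D) (hD3 : ∀ d ∈ D, (3 : ℤ) ∣ d) (hDF : ∀ a ∈ D, ∀ b ∈ D, a + b ∉ F) :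
    ∃ A : Set ℤ, (∀ n, (reps A n).encard = f n) ∧ ∀ j : ℕ,
      {d | d ∈ D ∧ |d| ≤ 2 ^ j ∧ d ∉ A}.ncard ≤ (F.card + 4) * (2 * j + 3) ^ 3 := by
  classical
  have hex : ∀ (j : ℕ) (p : {p // Stage D f p}), ∃ p' : {p // Stage D f p},
      StepRel D F f j (target j) p.1 p'.1 := fun j p => by
    obtain ⟨p', h1, h2⟩ := exists_step hf hD hD3 hDF j (target j) p.1 p.2
    exact ⟨⟨p', h1⟩, h2⟩
  choose next hnext using hex
  have h0 : Stage D f (∅, ∅) := by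
    refine ⟨by simp, by simp, fun n => ?_⟩
    have : reps ((∅ : Finset ℤ) : Set ℤ) n = ∅ := by ext; simp [reps]
    rw [this]; simp
  let st : ℕ → {p // Stage D f p} := fun j => Nat.rec ⟨(∅, ∅), h0⟩ next j
  have hst : ∀ j, StepRel D F f j (target j) (st j).1 (st (j + 1)).1 := fun j => hnext j (st j)
  have hmono : Monotone fun j => (st j).1.1 := monotone_nat_of_le_succ fun j => (hst j).1
  have hcard : ∀ j, (st j).1.2.card ≤ 2 * j := by
    intro j
    induction j with
    | zero => simp [st]
    | succ j ih => have := (hst j).2.1; omega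
  set A : Set ℤ := ⋃ j, ((st j).1.1 : Set ℤ) with hA
  have hle : ∀ j, ((st j).1.1 : Set ℤ) ⊆ A := fun j => Set.subset_iUnion_of_subset j subset_rfl
  have hreps : ∀ n, ∀ T : Finset ℤ, (T : Set ℤ) ⊆ reps A n → ∃ j, (T : Set ℤ) ⊆ reps (st j).1.1 n := by
    intro n T
    induction T using Finset.induction_on with
    | empty => exact fun _ => ⟨0, by simp⟩
    | insert a T _ ih =>
      intro hT
      rw [Finset.coe_insert, Set.insert_subset_iff] at hT
      obtain ⟨j, hj⟩ := ih hT.2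
      obtain ⟨ha1, ha2, ha3⟩ := hT.1
      obtain ⟨j1, h1⟩ := Set.mem_iUnion.mp ha1
      obtain ⟨j2, h2⟩ := Set.mem_iUnion.mp ha2
      refine ⟨max j (max j1 j2), ?_⟩
      rw [Finset.coe_insert, Set.insert_subset_iff]
      refine ⟨⟨hmono (by omega : j1 ≤ max j (max j1 j2)) h1,
        hmono (by omega : j2 ≤ max j (max j1 j2)) h2, ha3⟩, hj.trans (reps_mono ?_ n)⟩
      exact Finset.coe_subset.mpr (hmono (le_max_left _ _))
  refine ⟨A, fun n => le_antisymm ?_ ?_, fun j => ?_⟩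
  · by_contra hlt
    rw [not_le] at hlt
    obtain ⟨T, hT, hTc⟩ := Set.exists_subset_encard_eq (Order.add_one_le_of_lt hlt)
    have hfin : f n ≠ ⊤ := hlt.ne_top
    have hTfin : T.Finite := by
      rw [← Set.encard_ne_top_iff, hTc]
      exact WithTop.add_ne_top.mpr ⟨hfin, ENat.one_ne_top⟩
    obtain ⟨j, hj⟩ := hreps n hTfin.toFinset (by simpa using hT)
    have h1 := (Set.encard_le_encard hj).trans ((st j).2.2.2 n)
    rw [Set.Finite.coe_toFinset, hTc] at h1
    exact absurd h1 (not_le.mpr (ENat.lt_add_one_iff hfin |>.mpr le_rfl))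
  · by_contra hlt
    rw [not_le] at hlt
    have hstlt : ∀ j, (reps (st j).1.1 n).encard < f n := fun j =>
      (Set.encard_le_encard (reps_mono (hle j) n)).trans_lt hlt
    have hunb : ∀ M : ℕ, ∃ j, (M : ℕ∞) ≤ (reps (st j).1.1 n).encard := by
      intro M
      induction M with
      | zero => exact ⟨0, by simp⟩
      | succ M ih =>
        obtain ⟨j, hj⟩ := ih
        obtain ⟨i, hi, hin⟩ := exists_target n j
        have hs := (hst i).2.2.2
        rw [hin] at hs
        refine ⟨i + 1, ?_⟩
        push_cast
        refine le_trans ?_ (hs.resolve_left (not_le.mpr (hstlt i)))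
        gcongr
        exact hj.trans (Set.encard_le_encard (reps_mono (Finset.coe_subset.mpr (hmono hi)) n))
    have htop : (reps A n).encard = ⊤ := by
      refine ENat.eq_top_iff_forall_ge.mpr fun M => ?_
      obtain ⟨j, hj⟩ := hunb M
      exact hj.trans (Set.encard_le_encard (reps_mono (hle j) n))
    rw [htop] at hlt
    exact not_top_lt hlt
  · obtain ⟨hfin, hb⟩ := ncard_badSet_le hD (st (j + 1)).1.2 F
    refine (Set.ncard_le_ncard ?_ hfin).trans (hb.trans ?_)
    · rintro d ⟨h1, h2, h3⟩
      by_contra hbad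
      exact h3 (hle (j + 1) ((hst j).2.2.1 d h1 h2 hbad))
    · have := hcard (j + 1)
      exact Nat.mul_le_mul_left _ (Nat.pow_le_pow_left (by omega) 3)

/-! ### Density of the constructed set -/

lemma eventually_density {α β : ℝ} (hβ : 0 < β) (hαβ : β < α) (hα : α ≤ 1) (M N : ℝ) :
    ∀ᶠ x : ℝ in atTop,
      x ^ β ≤ (x / 3) ^ α - N - M * (2 * (⌈Real.logb 2 x⌉₊ : ℝ) + 3) ^ 3 := by
  have h1 : ∀ᶠ x : ℝ in atTop, ‖x ^ β‖ ≤ (1 / 9) * ‖x ^ α‖ := by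
    filter_upwards [(tendsto_rpow_neg_atTop (sub_pos.mpr hαβ)).eventually_le_const
      (show (0 : ℝ) < 1 / 9 by norm_num), eventually_gt_atTop 0] with x hx hx0
    rw [Real.norm_of_nonneg (by positivity), Real.norm_of_nonneg (by positivity),
      show β = -(α - β) + α by ring, Real.rpow_add hx0]
    gcongr
  have h2 : ∀ᶠ x : ℝ in atTop, N ≤ (1 / 9) * x ^ α := by
    have := (tendsto_rpow_atTop (hβ.trans hαβ)).const_mul_atTop (show (0 : ℝ) < 1 / 9 by norm_num)
    exact this.eventually_ge_atTop N
  have h3 : ∀ᶠ x : ℝ in atTop, ‖Real.log x ^ (3 : ℝ)‖ ≤ (1 / (9 * 64 * (|M| + 1))) * ‖x ^ α‖ :=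
    (isLittleO_log_rpow_rpow_atTop 3 (hβ.trans hαβ)).bound (by positivity)
  have h4 : ∀ᶠ x : ℝ in atTop, 5 ≤ Real.log x := Real.tendsto_log_atTop.eventually_ge_atTop 5
  filter_upwards [h1, h2, h3, h4, eventually_ge_atTop 1] with x h1 h2 h3 h4 hx
  have hxα : 0 < x ^ α := Real.rpow_pos_of_pos (by linarith) _
  rw [Real.norm_of_nonneg (by positivity), Real.norm_of_nonneg hxα.le] at h1
  rw [show (3 : ℝ) = (3 : ℕ) by norm_num, Real.rpow_natCast, Real.norm_of_nonneg (by positivity),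
    Real.norm_of_nonneg hxα.le] at h3
  have h5 : x ^ α / 3 ≤ (x / 3) ^ α := by
    rw [Real.div_rpow (by linarith) (by norm_num)]
    gcongr
    calc (3 : ℝ) ^ α ≤ 3 ^ (1 : ℝ) := Real.rpow_le_rpow_of_exponent_le (by norm_num) hα
      _ = 3 := Real.rpow_one 3
  have h6 : 2 * (⌈Real.logb 2 x⌉₊ : ℝ) + 3 ≤ 4 * Real.log x := by
    have h7 := (Nat.ceil_lt_add_one (Real.logb_nonneg (b := 2) (by norm_num) hx)).le
    have h8 : Real.logb 2 x ≤ 1.45 * Real.log x := by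
      unfold Real.logb
      rw [div_le_iff₀ (Real.log_pos (by norm_num))]
      nlinarith [Real.log_two_gt_d9]
    linarith
  have h9 : M * (2 * (⌈Real.logb 2 x⌉₊ : ℝ) + 3) ^ 3 ≤ (1 / 9) * x ^ α := by
    calc M * (2 * (⌈Real.logb 2 x⌉₊ : ℝ) + 3) ^ 3
        ≤ (|M| + 1) * (4 * Real.log x) ^ 3 := by
          gcongr
          linarith [le_abs_self M]
      _ = 64 * (|M| + 1) * Real.log x ^ 3 := by ring
      _ ≤ 64 * (|M| + 1) * ((1 / (9 * 64 * (|M| + 1))) * x ^ α) := by gcongr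
      _ = _ := by field_simp
  linarith

/-- The multiples of `3` exceeding `N` obtained from `B`. -/
def tripled (B : Set ℕ) (N : ℕ) : Set ℤ := {d | ∃ b ∈ B, N < b ∧ d = 3 * (b : ℤ)}

/-- The elements of `B` up to `x / 3` are counted by `A`, except those up to `N` and those whose triples
have been skipped. -/
lemma ncard_le_countAbs {A : Set ℤ} {B : Set ℕ} {N K : ℕ} (x : ℝ) (j : ℕ) (hxj : x ≤ 2 ^ j)
    (hK : {d | d ∈ tripled B N ∧ |d| ≤ 2 ^ j ∧ d ∉ A}.ncard ≤ K) :
    {b | b ∈ B ∧ (b : ℝ) ≤ x / 3}.ncard ≤ countAbs A x + (N + 1) + K := by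
  have hinj : Function.Injective (fun b : ℕ => 3 * (b : ℤ)) := fun a b h => by
    simp only at h; omega
  have hfin1 : {a : ℤ | a ∈ A ∧ |(a : ℝ)| ≤ x}.Finite := by
    refine (Set.finite_Icc (-⌊x⌋) ⌊x⌋).subset fun a ha => ?_
    rw [Set.mem_Icc, ← abs_le, Int.le_floor]
    exact_mod_cast ha.2
  have hfin3 : {d | d ∈ tripled B N ∧ |d| ≤ 2 ^ j ∧ d ∉ A}.Finite :=
    (Set.finite_Icc (-2 ^ j : ℤ) (2 ^ j)).subset fun a ha => abs_le.mp ha.2.1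
  have hfin2 : ((fun b : ℕ => 3 * (b : ℤ)) '' Set.Iic N).Finite := (Set.finite_Iic N).image _
  have hsub : (fun b : ℕ => 3 * (b : ℤ)) '' {b | b ∈ B ∧ (b : ℝ) ≤ x / 3} ⊆
      ({a : ℤ | a ∈ A ∧ |(a : ℝ)| ≤ x} ∪ (fun b : ℕ => 3 * (b : ℤ)) '' Set.Iic N) ∪
        {d | d ∈ tripled B N ∧ |d| ≤ 2 ^ j ∧ d ∉ A} := by
    rintro _ ⟨b, ⟨hb, hbx⟩, rfl⟩
    by_cases hN : b ≤ N
    · exact Or.inl (Or.inr ⟨b, hN, rfl⟩)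
    have habs : |((3 * (b : ℤ) : ℤ) : ℝ)| ≤ x := by
      rw [abs_of_nonneg (by positivity)]
      push_cast
      linarith
    by_cases hA : 3 * (b : ℤ) ∈ A
    · exact Or.inl (Or.inl ⟨hA, habs⟩)
    · refine Or.inr ⟨⟨b, hb, not_le.mp hN, rfl⟩, ?_, hA⟩
      change |3 * (b : ℤ)| ≤ 2 ^ j
      have h := habs.trans hxj
      rw [← Int.cast_abs] at h
      exact_mod_cast h
  have h1 := Set.ncard_le_ncard hsub ((hfin1.union hfin2).union hfin3)
  rw [Set.ncard_image_of_injective _ hinj] at h1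
  have h2 := Set.ncard_union_le
    ({a : ℤ | a ∈ A ∧ |(a : ℝ)| ≤ x} ∪ (fun b : ℕ => 3 * (b : ℤ)) '' Set.Iic N)
    {d | d ∈ tripled B N ∧ |d| ≤ 2 ^ j ∧ d ∉ A}
  have h3 := Set.ncard_union_le {a : ℤ | a ∈ A ∧ |(a : ℝ)| ≤ x}
    ((fun b : ℕ => 3 * (b : ℤ)) '' Set.Iic N)
  rw [Set.ncard_image_of_injective _ hinj] at h3
  have h4 : (Set.Iic N).ncard = N + 1 := by
    rw [← Nat.card_coe_set_eq]
    simp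
  unfold countAbs
  omega

theorem stmt_1 (f : ℤ → ℕ∞) (hf : 1 ≤ Filter.liminf f Filter.cofinite) :
    ∃ A : Set ℤ, (∀ n : ℤ, repFn A 2 n = f n) ∧
      ∀ δ : ℝ, 0 < δ →
        ∀ᶠ x in Filter.atTop, x ^ (Real.sqrt 2 - 1 - δ) ≤ (countAbs A x : ℝ) := by
  have hfin : {n | ¬ 0 < f n}.Finite :=
    Filter.eventually_lt_of_lt_liminf (lt_of_lt_of_le zero_lt_one hf)
  set F := hfin.toFinset with hF
  have hf1 : ∀ n, n ∉ F → 1 ≤ f n := by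
    intro n hn
    rw [hF, Set.Finite.mem_toFinset, Set.mem_ofPred_eq, not_not] at hn
    exact Order.one_le_iff_pos.mpr hn
  obtain ⟨B, hB, hBcount⟩ := exists_sidon
  obtain ⟨N, hN⟩ : ∃ N : ℕ, ∀ a ∈ F, a ≤ N := by
    refine ⟨∑ a ∈ F, a.natAbs, fun a ha => ?_⟩
    have := Finset.single_le_sum (f := fun a : ℤ => a.natAbs) (fun _ _ => Nat.zero_le _) ha
    omega
  obtain ⟨A, hA, hAcount⟩ := exists_set (D := tripled B N) hf1
    (by
      rintro _ ⟨a, ha, -, rfl⟩ _ ⟨b, hb, -, rfl⟩ _ ⟨c, hc, -, rfl⟩ _ ⟨d, hd, -, rfl⟩ h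
      have := hB a ha b hb c hc d hd (by omega)
      omega)
    (by rintro _ ⟨a, -, -, rfl⟩; exact Dvd.intro _ rfl)
    (by
      rintro _ ⟨a, -, ha, rfl⟩ _ ⟨b, -, hb, rfl⟩ h
      have := hN _ h
      omega)
  refine ⟨A, fun n => by rw [repFn_two, hA], fun δ hδ => ?_⟩
  have c1 := cexp_gt
  have c2 := cexp_lt
  unfold cexp at c1 c2
  -- decreasing `δ` strengthens the claim, so it may be assumed that the exponent is positive
  obtain ⟨ε, hε, hεδ, hεc⟩ : ∃ ε : ℝ, 0 < ε ∧ ε ≤ δ ∧ ε < Real.sqrt 2 - 1 :=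
    ⟨min δ 0.4, lt_min hδ (by norm_num), min_le_left _ _,
      (min_le_right _ _).trans_lt (by linarith)⟩
  have hdens := eventually_density (α := Real.sqrt 2 - 1 - ε / 2) (β := Real.sqrt 2 - 1 - ε)
    (by linarith) (by linarith) (by linarith) ((F.card : ℝ) + 4) (N + 1)
  have hBc := (tendsto_id.atTop_div_const (show (0 : ℝ) < 3 by norm_num)).eventually
    (hBcount (ε / 2) (by linarith) (by linarith))
  filter_upwards [hdens, hBc, eventually_ge_atTop 1] with x h1 h2 hx
  set j := ⌈Real.logb 2 x⌉₊ with hj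
  have hxj : x ≤ 2 ^ j := by
    rw [← Real.rpow_natCast, ← Real.logb_le_iff_le_rpow (by norm_num) (by linarith)]
    exact Nat.le_ceil _
  have h3 := ncard_le_countAbs x j hxj (hAcount j)
  have h4 : ({b | b ∈ B ∧ (b : ℝ) ≤ x / 3}.ncard : ℝ) ≤
      countAbs A x + (N + 1) + (F.card + 4) * (2 * j + 3) ^ 3 := by
    exact_mod_cast h3
  simp only [id] at h2
  calc x ^ (Real.sqrt 2 - 1 - δ) ≤ x ^ (Real.sqrt 2 - 1 - ε) :=
        Real.rpow_le_rpow_of_exponent_le hx (by linarith)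
    _ ≤ _ := by linarith
end
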